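/- Let G be a 5-connected nonplanar apex graph such that some apex vertex v of G lies in a 5-element vertex cut of G. Then G contains a subdivision of K₅ or contains K₄⁻ as a subgraph. -/

import Mathlib

open SimpleGraph

variable {V : Type*}

/-- `K₄⁻` (two triangles sharing the edge `ab`; the edge `cd` may be absent)
occurs as a subgraph of `G`. -/
def containsK4minus (G : SimpleGraph V) : Prop :=
  ∃ a b c d : V, a ≠ b ∧ a ≠ c ∧ a ≠ d ∧ b ≠ c ∧ b ≠ d ∧ c ≠ d ∧
    G.Adj a b ∧ G.Adj a c ∧ G.Adj a d ∧ G.Adj b c ∧ G.Adj b d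

/-- `G` contains a subdivision of `K₅`: five branch vertices joined by
pairwise internally disjoint paths. -/
def containsK5Subdivision (G : SimpleGraph V) : Prop :=
  ∃ (b : Fin 5 → V) (P : ∀ i j : Fin 5, G.Walk (b i) (b j)),
    Function.Injective b ∧
    (∀ i j, i ≠ j → (P i j).IsPath) ∧
    (∀ i j, i ≠ j → ∀ k, b k ∈ (P i j).support → k = i ∨ k = j) ∧
    (∀ i j i' j', i < j → i' < j' → (i, j) ≠ (i', j') →
      ∀ x, x ∈ (P i j).support → x ∈ (P i' j').support → x = b i ∨ x = b j)

/-- `G` has an `H`-minor (branch sets are connected, disjoint, joined by edges). -/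
def HasMinor {W : Type*} (G : SimpleGraph V) (H : SimpleGraph W) : Prop :=
  ∃ f : W → Set V,
    (∀ w, (G.induce (f w)).Connected) ∧
    (∀ w₁ w₂, w₁ ≠ w₂ → Disjoint (f w₁) (f w₂)) ∧
    (∀ w₁ w₂, H.Adj w₁ w₂ → ∃ x ∈ f w₁, ∃ y ∈ f w₂, G.Adj x y)

/-- Planarity, via Wagner's theorem: no `K₅` and no `K₃,₃` minor. -/
def IsPlanar (G : SimpleGraph V) : Prop :=
  ¬ HasMinor G (completeGraph (Fin 5)) ∧
  ¬ HasMinor G (completeBipartiteGraph (Fin 3) (Fin 3))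

/-- `G` is `k`-connected: more than `k` vertices, and removing fewer than `k`
vertices leaves a connected graph. -/
def IsKConnected (k : ℕ) (G : SimpleGraph V) : Prop :=
  k < (Set.univ : Set V).ncard ∧
  ∀ S : Set V, S.Finite → S.ncard < k → (G.induce Sᶜ).Connected

/-- Boundary of a subgraph `H` of `G`: vertices of `H` incident with an edge
of `G` not in `H`. -/
def bnd (G : SimpleGraph V) (H : G.Subgraph) : Set V :=
  {v | v ∈ H.verts ∧ ∃ w, G.Adj v w ∧ ¬ H.Adj v w}

/-- A `k`-hammock: connected subgraph with boundary of size `k`. -/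
def IsHammock (G : SimpleGraph V) (k : ℕ) (H : G.Subgraph) : Prop :=
  H.Connected ∧ (bnd G H).ncard = k

def TrivialHammock (G : SimpleGraph V) (H : G.Subgraph) : Prop :=
  H.verts = bnd G H

def DegenerateHammock (G : SimpleGraph V) (H : G.Subgraph) : Prop :=
  H.verts.ncard = (bnd G H).ncard + 1

def FatHammock (G : SimpleGraph V) (H : G.Subgraph) : Prop :=
  (bnd G H).ncard + 2 ≤ H.verts.ncard

/-- A `4`-hammock is minimal if all its proper `4`-hammocks are trivial or degenerate. -/
def Minimal4Hammock (G : SimpleGraph V) (H : G.Subgraph) : Prop :=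
  IsHammock G 4 H ∧
  ∀ H' : G.Subgraph, H' ≤ H → H' ≠ H → IsHammock G 4 H' →
    TrivialHammock G H' ∨ DegenerateHammock G H'

def MinimalFat4Hammock (G : SimpleGraph V) (H : G.Subgraph) : Prop :=
  Minimal4Hammock G H ∧ FatHammock G H

/-- The list `l` records a cycle of `G` (vertices in clockwise order). -/
def IsCycleList (G : SimpleGraph V) (l : List V) : Prop :=
  l.Nodup ∧ 3 ≤ l.length ∧
    ∀ i : Fin l.length,
      G.Adj (l.get i) (l.get ⟨((i : ℕ) + 1) % l.length, Nat.mod_lt _ i.pos⟩)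

/-- `x` and `y` are consecutive on the cyclic list `C`. -/
def CycAdj (C : List V) (x y : V) : Prop :=
  ∃ i : Fin C.length,
    (C.get i = x ∧ C.get ⟨((i : ℕ) + 1) % C.length, Nat.mod_lt _ i.pos⟩ = y) ∨
    (C.get i = y ∧ C.get ⟨((i : ℕ) + 1) % C.length, Nat.mod_lt _ i.pos⟩ = x)

/-- Clockwise (forward) distance between positions on a cycle of length `n`. -/
def cycDist (n i j : ℕ) : ℕ := (j + n - i) % n

/-- The open segment of the cycle `C` from `a` clockwise to `b`. -/
def segOpen (C : List V) (a b : V) : Set V :=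
  {x | ∃ i j k : Fin C.length, C.get i = a ∧ C.get j = b ∧ C.get k = x ∧
    k ≠ i ∧ k ≠ j ∧ cycDist C.length (i : ℕ) (k : ℕ) < cycDist C.length (i : ℕ) (j : ℕ)}

/-- The closed segment of the cycle `C` from `a` clockwise to `b`. -/
def segClosed (C : List V) (a b : V) : Set V := segOpen C a b ∪ {a, b}

/-- `a 0, a 1, a 2, a 3` appear in this clockwise order along the cycle `C`. -/
def ClockwiseOn (C : List V) (a : Fin 4 → V) : Prop :=
  ∃ p : Fin 4 → Fin C.length, (∀ j, C.get (p j) = a j) ∧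
    ∀ j k : Fin 4, j < k →
      cycDist C.length ((p 0 : Fin C.length) : ℕ) ((p j : Fin C.length) : ℕ) <
        cycDist C.length ((p 0 : Fin C.length) : ℕ) ((p k : Fin C.length) : ℕ)

/-- `x` and `y` are consecutive among the points of `S` on the cycle `C`:
one of the two open arcs between them misses `S`. -/
def ConsecutiveOn (C : List V) (S : Set V) (x y : V) : Prop :=
  segOpen C x y ∩ S = ∅ ∨ segOpen C y x ∩ S = ∅

/-- A combinatorial plane graph: a graph together with its facial cycles and a
distinguished outer face; every edge lies on exactly two faces and every vertex
on exactly `deg` faces (valid for `2`-connected plane graphs). -/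
structure PlaneGraph (V : Type*) where
  graph : SimpleGraph V
  faces : Finset (List V)
  outer : List V
  outer_mem : outer ∈ faces
  faces_cycle : ∀ f ∈ faces, IsCycleList graph f
  edge_two_faces : ∀ x y, graph.Adj x y →
    {f ∈ (faces : Set (List V)) | CycAdj f x y}.ncard = 2
  vertex_faces : ∀ v : V,
    {f ∈ (faces : Set (List V)) | v ∈ f}.ncard = (graph.neighborSet v).ncard

def Cofacial (P : PlaneGraph V) (u w : V) : Prop :=
  ∃ f ∈ P.faces, u ∈ f ∧ w ∈ f

/-- `C` is the rim of the facial wheel `S_u`: the induced cycle on the vertices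
cofacial with `u`, containing `N(u)` and separating `u` from the rest of the graph. -/
def IsFacialRim (P : PlaneGraph V) (u : V) (C : List V) : Prop :=
  IsCycleList P.graph C ∧ u ∉ C ∧
  (∀ w, w ∈ C ↔ (w ≠ u ∧ Cofacial P u w)) ∧
  P.graph.neighborSet u ⊆ {x | x ∈ C} ∧
  (∀ x ∈ C, ∀ y ∈ C, P.graph.Adj x y → CycAdj C x y) ∧
  (∀ w, w ∉ C → w ≠ u → ∀ p : P.graph.Walk u w, ∃ x ∈ p.support, x ∈ C)

/-- The facial wheel `S_u` (hub `u`, spokes, and rim `C`) is a subgraph of `H`. -/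
def WheelIn (G : SimpleGraph V) (H : G.Subgraph) (u : V) (C : List V) : Prop :=
  u ∈ H.verts ∧ (∀ x ∈ C, x ∈ H.verts) ∧
  (∀ x, G.Adj u x → H.Adj u x) ∧
  (∀ x y, CycAdj C x y → H.Adj x y)

/-- A system of `k` pairwise vertex-disjoint `(A,B)`-paths inside the subgraph `H`,
internally disjoint from `A ∪ B`. -/
structure Linkage (G : SimpleGraph V) (H : G.Subgraph) (A B : Set V) (k : ℕ) where
  s : Fin k → V
  t : Fin k → V
  walk : ∀ i, G.Walk (s i) (t i)
  isPath : ∀ i, (walk i).IsPath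
  support_mem : ∀ i, ∀ x ∈ (walk i).support, x ∈ H.verts
  edges_mem : ∀ i, ∀ e ∈ (walk i).edges, e ∈ H.edgeSet
  s_mem : ∀ i, s i ∈ A
  t_mem : ∀ i, t i ∈ B
  internal : ∀ i, ∀ x ∈ (walk i).support, x ≠ s i → x ≠ t i → x ∉ A ∧ x ∉ B
  disj : ∀ i j, i ≠ j → ∀ x ∈ (walk i).support, x ∉ (walk j).support

/-- A `C_u`-linkage: a `(bnd H, C)`-4-linkage in `H`. -/
abbrev CuLinkage (G : SimpleGraph V) (H : G.Subgraph) (C : List V) :=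
  Linkage G H (bnd G H) {x | x ∈ C} 4

/-- `α(L)`: the number of endpoints of the linkage lying in `N(u)`. -/
noncomputable def lAlpha (G : SimpleGraph V) (u : V) {H : G.Subgraph} {A B : Set V} {k : ℕ}
    (L : Linkage G H A B k) : ℕ :=
  {i : Fin k | L.t i ∈ G.neighborSet u}.ncard

/-- Data of a short wheel: the four neighbours of `u` in clockwise rim order,
two edge-disjoint triangles at `u`, and the two remaining rim segments of
order between 2 and 4, not both of order 4. -/
def ShortWheelOn (G : SimpleGraph V) (u : V) (C : List V) (n : Fin 4 → V) : Prop :=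
  ClockwiseOn C n ∧ Set.range n = G.neighborSet u ∧
  G.Adj (n 0) (n 1) ∧ G.Adj (n 2) (n 3) ∧
  (segOpen C (n 1) (n 2)).ncard ≤ 2 ∧ (segOpen C (n 3) (n 0)).ncard ≤ 2 ∧
  ¬((segOpen C (n 1) (n 2)).ncard = 2 ∧ (segOpen C (n 3) (n 0)).ncard = 2)

def IsShortWheel (G : SimpleGraph V) (u : V) (C : List V) : Prop :=
  (G.neighborSet u).ncard = 4 ∧ ∃ n, ShortWheelOn G u C n

/-- A short wheel which, if imbalanced (a segment of order 4), is proper with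
respect to the boundary set `B`: the interior of that segment avoids `B`. -/
def IsShortProperWheel (G : SimpleGraph V) (u : V) (C : List V) (B : Set V) : Prop :=
  (G.neighborSet u).ncard = 4 ∧ ∃ n, ShortWheelOn G u C n ∧
    ((segOpen C (n 1) (n 2)).ncard = 2 → segOpen C (n 1) (n 2) ∩ B = ∅) ∧
    ((segOpen C (n 3) (n 0)).ncard = 2 → segOpen C (n 3) (n 0) ∩ B = ∅)

/-!
Suppose that `G` has no `K₄⁻`, and let `H = G - v` have `n` vertices, `m` edges and `t` triangles.
By Tutte's theorem the peripheral cycles of the 3-connected graph `H` generate its cycle space over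
`𝔽₂`, so there are at least `m - n + 1` of them. Since `H` is planar, no edge lies on three of them,
as three peripheral cycles through one edge produce a `K₅` or `K₃,₃` minor. Their lengths therefore
add up to at most `2m`; as all but at most `t` of them have length at least 4, this gives
`2m + 4 ≤ 4n + t`.

On the other hand the triangles of `H` are edge-disjoint and each has at most one vertex adjacent to
`v`. A vertex of `H` of degree `d` lies on at most `d / 2` triangles, and has `d ≥ 5` unless it is
adjacent to `v`, when `d ≥ 4`. Counting the incidences of triangles with non-neighbours of `v` gives
`2t + 8n ≤ 4m`, a contradiction.

Tutte's theorem is proved in its dual form, that an edge labelling over `ZMod 2` with zero sum along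
every peripheral cycle is a coboundary. If it is not, choose a maximal connected set `K` of vertices
such that the labelling is not a coboundary on the complement of `K`: the complement is then a
peripheral cycle along which the sum is nonzero.
-/

/-! ### Connected vertex sets -/

section Connectivity

variable {G : SimpleGraph V} {A B M N R U Z : Set V}

/-- Some edge of `G` joins the vertex sets `A` and `B`. -/
def Touch (G : SimpleGraph V) (A B : Set V) : Prop :=
  ∃ a ∈ A, ∃ b ∈ B, G.Adj a b

theorem Touch.symm (h : Touch G A B) : Touch G B A :=
  let ⟨a, ha, b, hb, hab⟩ := h
  ⟨b, hb, a, ha, hab.symm⟩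

theorem Touch.mono (h : Touch G A B) (hA : A ⊆ M) (hB : B ⊆ N) : Touch G M N :=
  let ⟨a, ha, b, hb, hab⟩ := h
  ⟨a, hA ha, b, hB hb, hab⟩

theorem connected_induce_singleton (x : V) : (G.induce {x}).Connected :=
  Connected.of_subsingleton

theorem connected_induce_union_of_touch (hA : (G.induce A).Connected)
    (hB : (G.induce B).Connected) (h : Touch G A B) : (G.induce (A ∪ B)).Connected :=
  let ⟨_, ha, _, hb, hab⟩ := h
  connected_induce_union hA.preconnected hB.preconnected ha hb hab

theorem touch_sdiff_of_connected (hU : (G.induce U).Connected) (hA : A.Nonempty) (hAU : A ⊆ U)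
    (hne : A ≠ U) : Touch G A (U \ A) := by
  obtain ⟨a, ha⟩ := hA
  obtain ⟨b, hbU, hbA⟩ := Set.exists_of_ssubset (hAU.ssubset_of_ne hne)
  obtain ⟨p⟩ : (G.induce U).Reachable ⟨a, hAU ha⟩ ⟨b, hbU⟩ := hU.preconnected _ _
  obtain ⟨d, -, hd₁, hd₂⟩ := p.exists_boundary_dart (Subtype.val ⁻¹' A) ha hbA
  exact ⟨d.fst, hd₁, d.snd, ⟨d.snd.2, hd₂⟩, d.adj⟩

/-- `M` is the vertex set of a connected component of the subgraph induced on `U`. -/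
structure IsComponentOf (G : SimpleGraph V) (M U : Set V) : Prop where
  subset : M ⊆ U
  connected : (G.induce M).Connected
  mem_of_adj : ∀ x ∈ M, ∀ y ∈ U, G.Adj x y → y ∈ M

theorem IsComponentOf.nonempty (hM : IsComponentOf G M U) : M.Nonempty :=
  Set.nonempty_coe_sort.1 hM.connected.nonempty

theorem exists_isComponentOf (hZ : (G.induce Z).Connected) (hZU : Z ⊆ U) :
    ∃ M, Z ⊆ M ∧ IsComponentOf G M U := by
  have hZ₀ : Z.Nonempty := Set.nonempty_coe_sort.1 hZ.nonempty
  let 𝒮 := {S | Z ⊆ S ∧ S ⊆ U ∧ (G.induce S).Connected}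
  have hZ𝒮 : Z ∈ 𝒮 := ⟨subset_rfl, hZU, hZ⟩
  have hconn : (G.induce (⋃₀ 𝒮)).Connected :=
    induce_sUnion_connected_of_pairwise_not_disjoint ⟨Z, hZ𝒮⟩
      (fun hS hT ↦ hZ₀.mono (Set.subset_inter hS.1 hT.1)) (fun hS ↦ hS.2.2)
  refine ⟨⋃₀ 𝒮, Set.subset_sUnion_of_mem hZ𝒮, Set.sUnion_subset fun S hS ↦ hS.2.1, hconn,
    fun x hx y hy hxy ↦ ?_⟩
  obtain ⟨S, ⟨hZS, hSU, hS⟩, hxS⟩ := hx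
  exact ⟨S ∪ {y}, ⟨hZS.trans Set.subset_union_left, Set.union_subset hSU (by simpa using hy),
    connected_induce_union_of_touch hS (connected_induce_singleton y) ⟨x, hxS, y, rfl, hxy⟩⟩,
    Or.inr rfl⟩

theorem exists_isComponentOf_mem {x : V} (hx : x ∈ U) : ∃ M, x ∈ M ∧ IsComponentOf G M U := by
  simpa using exists_isComponentOf (connected_induce_singleton x) (Set.singleton_subset_iff.2 hx)

theorem exists_finset_isComponentOf_mem {x : V} (hU : U.Finite) (hx : x ∈ U) :
    ∃ M : Finset V, x ∈ M ∧ IsComponentOf G M U := by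
  obtain ⟨M, hxM, hM⟩ := exists_isComponentOf_mem (G := G) hx
  obtain ⟨M, rfl⟩ := (hU.subset hM.subset).exists_finset_coe
  exact ⟨M, hxM, hM⟩

theorem IsComponentOf.subset_of_connected (hM : IsComponentOf G M U)
    (hZ : (G.induce Z).Connected) (hZU : Z ⊆ U) (hZM : (Z ∩ M).Nonempty) : Z ⊆ M := by
  by_contra hsub
  obtain ⟨x, hx, y, hy, hxy⟩ := touch_sdiff_of_connected hZ hZM Set.inter_subset_left
    (fun h ↦ hsub (Set.inter_eq_left.1 h))
  exact hy.2 ⟨hy.1, hM.mem_of_adj x hx.2 y (hZU hy.1) hxy⟩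

theorem IsComponentOf.eq_of_not_disjoint (hM : IsComponentOf G M U) (hN : IsComponentOf G N U)
    (h : (M ∩ N).Nonempty) : M = N :=
  (hN.subset_of_connected hM.connected hM.subset h).antisymm
    (hM.subset_of_connected hN.connected hN.subset (Set.inter_comm M N ▸ h))

theorem exists_connected_superset_touch (hU : (G.induce U).Connected)
    (hZ : (G.induce Z).Connected) (hZU : Z ⊆ U) (hRU : (R ∩ U).Nonempty) (hZR : Disjoint Z R) :
    ∃ M, Z ⊆ M ∧ M ⊆ U ∧ Disjoint M R ∧ (G.induce M).Connected ∧ Touch G M R := by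
  obtain ⟨M, hZM, hM⟩ := exists_isComponentOf (U := U \ R) hZ
    (Set.subset_sdiff.2 ⟨hZU, hZR⟩)
  obtain ⟨hMU, hMR⟩ := Set.subset_sdiff.1 hM.subset
  refine ⟨M, hZM, hMU, hMR, hM.connected, ?_⟩
  obtain ⟨r, hrR, hrU⟩ := hRU
  obtain ⟨x, hx, y, ⟨hyU, hyM⟩, hxy⟩ := touch_sdiff_of_connected hU hM.nonempty hMU
    (fun h ↦ Set.disjoint_right.1 hMR hrR (h ▸ hrU))
  exact ⟨x, hx, y, by_contra fun hyR ↦ hyM (hM.mem_of_adj x hx y ⟨hyU, hyR⟩ hxy), hxy⟩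

theorem exists_connected_touch_touch (hU : (G.induce U).Connected)
    (hA : (G.induce A).Connected) (hAU : A ⊆ U) (hBU : (B ∩ U).Nonempty) (hAB : Disjoint A B)
    (hT : ¬ Touch G A B) :
    ∃ Z ⊆ U, Disjoint Z A ∧ Disjoint Z B ∧ (G.induce Z).Connected ∧
      Touch G Z A ∧ Touch G Z B := by
  obtain ⟨A', hAA', hA'U, hA'B, hA', z, hz, b, hb, hzb⟩ :=
    exists_connected_superset_touch hU hA hAU hBU hAB
  have hzA : z ∉ A := fun h ↦ hT ⟨z, h, b, hb, hzb⟩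
  obtain ⟨Z, hzZ, hZA', hZA, hZ, hZT⟩ := exists_connected_superset_touch (R := A) hA'
    (connected_induce_singleton z) (Set.singleton_subset_iff.2 hz)
    ((Set.inter_eq_left.2 hAA').symm ▸ Set.nonempty_coe_sort.1 hA.nonempty)
    (Set.disjoint_singleton_left.2 hzA)
  exact ⟨Z, hZA'.trans hA'U, hZA, hA'B.mono_left hZA', hZ, hZT, z, hzZ rfl, b, hb, hzb⟩

end Connectivity

/-! ### Minors -/

section Minors

variable {G : SimpleGraph V}

theorem hasMinor_completeBipartiteGraph {ι κ : Type*} {A : ι → Set V} {B : κ → Set V}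
    (hA : ∀ i, (G.induce (A i)).Connected) (hB : ∀ j, (G.induce (B j)).Connected)
    (hAA : Pairwise (Function.onFun Disjoint A)) (hBB : Pairwise (Function.onFun Disjoint B))
    (hAB : ∀ i j, Disjoint (A i) (B j)) (hT : ∀ i j, Touch G (A i) (B j)) :
    HasMinor G (completeBipartiteGraph ι κ) := by
  refine ⟨Sum.elim A B, Sum.rec hA hB, ?_, ?_⟩
  · rintro (i | i) (j | j) hij
    · exact hAA fun h ↦ hij (congrArg _ h)
    · exact hAB i j
    · exact (hAB j i).symm
    · exact hBB fun h ↦ hij (congrArg _ h)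
  · rintro (i | i) (j | j) hij
    · simp at hij
    · exact hT i j
    · exact (hT j i).symm
    · simp at hij

theorem hasMinor_completeBipartiteGraph_three {x y : V} {Z : Set V} {B : Fin 3 → Set V}
    (hxy : x ≠ y) (hZ : (G.induce Z).Connected) (hB : ∀ j, (G.induce (B j)).Connected)
    (hxZ : x ∉ Z) (hyZ : y ∉ Z) (hxB : ∀ j, x ∉ B j) (hyB : ∀ j, y ∉ B j)
    (hZB : ∀ j, Disjoint Z (B j)) (hBB : Pairwise (Function.onFun Disjoint B))
    (hxT : ∀ j, Touch G {x} (B j)) (hyT : ∀ j, Touch G {y} (B j)) (hZT : ∀ j, Touch G Z (B j)) :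
    HasMinor G (completeBipartiteGraph (Fin 3) (Fin 3)) := by
  refine hasMinor_completeBipartiteGraph (A := ![{x}, {y}, Z]) ?_ hB ?_ hBB ?_ ?_
  · simp [Fin.forall_fin_succ, hZ]
  · simp [pairwise_fin_succ_iff, Function.onFun, Fin.forall_fin_succ, hxy, hxZ,
      hyZ, Subsingleton.pairwise]
  · intro i j
    fin_cases i <;> simp [hxB, hyB, hZB]
  · intro i
    fin_cases i
    exacts [hxT, hyT, hZT]

/-- The sets `A i` are the branch sets of a model of the complete graph on `ι` in `G`. -/
structure IsCompleteModel {ι : Type*} (G : SimpleGraph V) (A : ι → Set V) : Prop where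
  connected : ∀ i, (G.induce (A i)).Connected
  disjoint : Pairwise (Function.onFun Disjoint A)
  touch : Pairwise (Function.onFun (Touch G) A)

theorem IsCompleteModel.hasMinor {ι : Type*} {A : ι → Set V} (hA : IsCompleteModel G A) :
    HasMinor G (completeGraph ι) :=
  ⟨A, hA.connected, fun _ _ h ↦ hA.disjoint h, fun _ _ h ↦ hA.touch h⟩

theorem IsCompleteModel.cons {n : ℕ} {A : Fin n → Set V} (hA : IsCompleteModel G A) {B : Set V}
    (hB : (G.induce B).Connected) (hdisj : ∀ i, Disjoint B (A i)) (hT : ∀ i, Touch G B (A i)) :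
    IsCompleteModel G (Fin.cons B A : Fin (n + 1) → Set V) where
  connected := Fin.cases hB hA.connected
  disjoint := pairwise_fin_succ_iff.2 ⟨fun i ↦ (hdisj i).symm, hdisj, hA.disjoint⟩
  touch := pairwise_fin_succ_iff.2 ⟨fun i ↦ (hT i).symm, hT, hA.touch⟩

end Minors

section

open scoped Finset Classical

/-! ### Degrees and edges inside a vertex set -/

section Degrees

variable {G : SimpleGraph V} {A B J R : Finset V} {x y : V}

/-- The neighbours of `x` that lie in the finite vertex set `J`. -/
noncomputable def neighborsIn (G : SimpleGraph V) (J : Finset V) (x : V) : Finset V :=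
  {y ∈ J | G.Adj x y}

/-- The edges of `G` with both ends in the finite vertex set `J`. -/
noncomputable def edgesIn (G : SimpleGraph V) (J : Finset V) : Finset (Sym2 V) :=
  {e ∈ J.sym2 | e ∈ G.edgeSet}

@[simp]
theorem mem_neighborsIn : y ∈ neighborsIn G J x ↔ y ∈ J ∧ G.Adj x y := by
  simp [neighborsIn]

@[simp]
theorem mk_mem_edgesIn : s(x, y) ∈ edgesIn G J ↔ (x ∈ J ∧ y ∈ J) ∧ G.Adj x y := by
  simp [edgesIn]

theorem neighborsIn_univ [Fintype V] (G : SimpleGraph V) (x : V) :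
    neighborsIn G Finset.univ x = G.neighborFinset x := by
  ext y
  simp

theorem neighborsIn_mono (h : R ⊆ J) (x : V) : neighborsIn G R x ⊆ neighborsIn G J x :=
  Finset.filter_subset_filter _ h

theorem touch_singleton_iff_neighborsIn_nonempty :
    Touch G {x} (J : Set V) ↔ (neighborsIn G J x).Nonempty := by
  simp [Touch, Finset.Nonempty]

theorem card_neighborsIn_add_card_neighborsIn_sdiff (h : R ⊆ J) (x : V) :
    #(neighborsIn G R x) + #(neighborsIn G (J \ R) x) = #(neighborsIn G J x) := by
  rw [neighborsIn, neighborsIn, neighborsIn, ← Finset.card_union_of_disjoint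
    (Finset.disjoint_filter_filter Finset.disjoint_sdiff), ← Finset.filter_union,
    Finset.union_sdiff_of_subset h]

theorem sum_card_neighborsIn_comm (G : SimpleGraph V) (A B : Finset V) :
    ∑ x ∈ A, #(neighborsIn G B x) = ∑ y ∈ B, #(neighborsIn G A y) := by
  simpa [Finset.bipartiteAbove, Finset.bipartiteBelow, neighborsIn, G.adj_comm]
    using Finset.sum_card_bipartiteAbove_eq_sum_card_bipartiteBelow (s := A) (t := B) G.Adj

theorem card_filter_mem_edgesIn (hx : x ∈ J) :
    #{e ∈ edgesIn G J | x ∈ e} = #(neighborsIn G J x) := by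
  have himage : {e ∈ edgesIn G J | x ∈ e} = (neighborsIn G J x).image (fun y ↦ s(x, y)) := by
    ext e
    simp only [Finset.mem_filter, Finset.mem_image, mem_neighborsIn]
    constructor
    · rintro ⟨he, y, rfl⟩
      exact ⟨y, ⟨(mk_mem_edgesIn.1 he).1.2, (mk_mem_edgesIn.1 he).2⟩, rfl⟩
    · rintro ⟨y, ⟨hy, hxy⟩, rfl⟩
      exact ⟨mk_mem_edgesIn.2 ⟨⟨hx, hy⟩, hxy⟩, Sym2.mem_mk_left x y⟩
  rw [himage, Finset.card_image_of_injective _ (fun y z ↦ Sym2.congr_right.1)]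

theorem sum_edgesIn_sum_toFinset {M : Type*} [AddCommMonoid M] (G : SimpleGraph V)
    (J : Finset V) (p : V → M) :
    ∑ e ∈ edgesIn G J, ∑ x ∈ e.toFinset, p x = ∑ x ∈ J, #(neighborsIn G J x) • p x := by
  rw [Finset.sum_comm' (t' := J) (s' := fun x ↦ {e ∈ edgesIn G J | x ∈ e})]
  · refine Finset.sum_congr rfl fun x hx ↦ ?_
    rw [Finset.sum_const, card_filter_mem_edgesIn hx]
  · intro e x
    simp only [edgesIn, Finset.mem_filter, Sym2.mem_toFinset, Finset.mem_sym2_iff]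
    tauto

theorem two_mul_card_edgesIn (G : SimpleGraph V) (J : Finset V) :
    2 * #(edgesIn G J) = ∑ x ∈ J, #(neighborsIn G J x) := by
  have hsum := sum_edgesIn_sum_toFinset G J (fun _ ↦ 1)
  rw [Finset.sum_congr rfl (g := fun _ ↦ 2)] at hsum
  · simpa [mul_comm] using hsum
  · intro e he
    simpa using Sym2.card_toFinset_of_not_isDiag e
      (G.not_isDiag_of_mem_edgeSet (Finset.mem_filter.1 he).2)

theorem card_le_card_edgesIn_add_one (hR : (G.induce (R : Set V)).Connected) :
    #R ≤ #(edgesIn G R) + 1 := by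
  let φ : (G.induce (R : Set V)).edgeSet → edgesIn G R := fun e ↦
    ⟨e.1.map Subtype.val, by
      obtain ⟨⟨x, y⟩, he⟩ := e
      exact mk_mem_edgesIn.2 ⟨⟨x.2, y.2⟩, he⟩⟩
  have hφ : Function.Injective φ := fun e e' h ↦
    Subtype.ext (Sym2.map.injective Subtype.val_injective (congrArg Subtype.val h))
  calc #R = Nat.card (R : Set V) := by simp
    _ ≤ Nat.card (G.induce (R : Set V)).edgeSet + 1 := hR.card_vert_le_card_edgeSet_add_one
    _ ≤ #(edgesIn G R) + 1 := by simpa using Nat.card_le_card_of_injective φ hφ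

end Degrees

/-! ### Potentials of edge labellings over `ZMod 2` -/

section Potentials

variable {G : SimpleGraph V} {f : Sym2 V → ZMod 2} {A B M T U : Set V} {p q : V → ZMod 2}

/-- The vertex labelling `p` is a potential on `U` for the edge labelling `f` over `ZMod 2`: its
coboundary is `f` on all edges inside `U`. -/
def IsPotentialOn (G : SimpleGraph V) (f : Sym2 V → ZMod 2) (U : Set V) (p : V → ZMod 2) : Prop :=
  ∀ x ∈ U, ∀ y ∈ U, G.Adj x y → f s(x, y) = p x + p y

/-- The edge labelling `f` is a coboundary on the subgraph induced on `U`. -/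
def IsBalancedOn (G : SimpleGraph V) (f : Sym2 V → ZMod 2) (U : Set V) : Prop :=
  ∃ p, IsPotentialOn G f U p

theorem IsPotentialOn.mono (hp : IsPotentialOn G f U p) (h : A ⊆ U) : IsPotentialOn G f A p :=
  fun x hx y hy ↦ hp x (h hx) y (h hy)

theorem IsBalancedOn.mono (hU : IsBalancedOn G f U) (h : A ⊆ U) : IsBalancedOn G f A :=
  hU.imp fun _ hp ↦ hp.mono h

theorem isBalancedOn_of_subsingleton (hU : U.Subsingleton) : IsBalancedOn G f U :=
  ⟨0, fun _ hx _ hy hxy ↦ (hxy.ne (hU hx hy)).elim⟩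

theorem IsPotentialOn.add_const (hp : IsPotentialOn G f U p) (c : ZMod 2) :
    IsPotentialOn G f U (fun x ↦ p x + c) := by
  intro x hx y hy hxy
  rw [hp x hx y hy hxy, add_add_add_comm, CharTwo.add_self_eq_zero, add_zero]

theorem IsBalancedOn.exists_isPotentialOn_apply_eq (hU : IsBalancedOn G f U) (u : V) (c : ZMod 2) :
    ∃ p, IsPotentialOn G f U p ∧ p u = c := by
  obtain ⟨p, hp⟩ := hU
  exact ⟨_, hp.add_const (c - p u), add_sub_cancel _ _⟩

theorem IsPotentialOn.eqOn_of_connected (hp : IsPotentialOn G f U p) (hq : IsPotentialOn G f U q)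
    (hU : (G.induce U).Connected) {u : V} (hu : u ∈ U) (hpq : p u = q u) : Set.EqOn p q U := by
  by_contra hne
  obtain ⟨x, hx, y, ⟨hyU, hy⟩, hxy⟩ := touch_sdiff_of_connected hU (A := {x ∈ U | p x = q x})
    ⟨u, hu, hpq⟩ (Set.sep_subset _ _) (fun h ↦ hne fun x hx ↦ ((h ▸ hx :) : x ∈ {x ∈ U | _}).2)
  have hsum : p x + p y = q x + q y := by rw [← hp x hx.1 y hyU hxy, hq x hx.1 y hyU hxy]
  rw [hx.2] at hsum
  exact hy ⟨hyU, add_left_cancel hsum⟩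

theorem IsPotentialOn.isBalancedOn_of_eqOn_inter (hp : IsPotentialOn G f A p)
    (hq : IsPotentialOn G f B q) (hpq : Set.EqOn p q (A ∩ B))
    (hU : ∀ x ∈ U, ∀ y ∈ U, G.Adj x y → x ∈ A ∧ y ∈ A ∨ x ∈ B ∧ y ∈ B) :
    IsBalancedOn G f U := by
  refine ⟨A.piecewise p q, fun x hx y hy hxy ↦ ?_⟩
  have hqB : ∀ z ∈ B, A.piecewise p q z = q z := fun z hz ↦ by
    by_cases hzA : z ∈ A
    · rw [Set.piecewise_eq_of_mem _ _ _ hzA, hpq ⟨hzA, hz⟩]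
    · exact Set.piecewise_eq_of_notMem _ _ _ hzA
  rcases hU x hx y hy hxy with ⟨hxA, hyA⟩ | ⟨hxB, hyB⟩
  · rw [Set.piecewise_eq_of_mem _ _ _ hxA, Set.piecewise_eq_of_mem _ _ _ hyA, hp x hxA y hyA hxy]
  · rw [hqB x hxB, hqB y hyB, hq x hxB y hyB hxy]

theorem IsPotentialOn.label_eq_of_connected {a y z : V} (hp : IsPotentialOn G f M p)
    (hM : (G.induce M).Connected) (haM : IsBalancedOn G f (insert a M))
    (hy : y ∈ M) (hz : z ∈ M) (hay : G.Adj a y) (haz : G.Adj a z) :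
    f s(a, y) + p y = f s(a, z) + p z := by
  obtain ⟨q, hq, hqy⟩ := haM.exists_isPotentialOn_apply_eq y (p y)
  have hpq : Set.EqOn p q M :=
    hp.eqOn_of_connected (hq.mono (Set.subset_insert a M)) hM hy hqy.symm
  have ha : a ∈ insert a M := Set.mem_insert a M
  rw [hq a ha y (Or.inr hy) hay, hq a ha z (Or.inr hz) haz, hpq hy, hpq hz,
    CharTwo.add_cancel_right, CharTwo.add_cancel_right]

theorem IsPotentialOn.isBalancedOn_of_label_eq {a : V} {c : ZMod 2}
    (hp : IsPotentialOn G f (U \ {a}) p) (hc : ∀ y ∈ U, G.Adj a y → f s(a, y) + p y = c) :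
    IsBalancedOn G f U := by
  have hpa : ∀ y ∈ U, G.Adj a y → f s(a, y) = c + p y := fun y hy hay ↦ by
    rw [← hc y hy hay, CharTwo.add_cancel_right]
  refine ⟨Function.update p a c, fun x hx y hy hxy ↦ ?_⟩
  obtain rfl | hxa := eq_or_ne x a
  · rw [Function.update_self, Function.update_of_ne hxy.ne', hpa y hy hxy]
  obtain rfl | hya := eq_or_ne y a
  · rw [Function.update_self, Function.update_of_ne hxy.ne, Sym2.eq_swap, hpa x hx hxy.symm,
      add_comm]
  · rw [Function.update_of_ne hxa, Function.update_of_ne hya, hp x ⟨hx, hxa⟩ y ⟨hy, hya⟩ hxy]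

/-- The edge labelling `f` is not a coboundary on `J`, but is one on `J` minus any vertex. -/
structure IsMinimalUnbalanced (G : SimpleGraph V) (f : Sym2 V → ZMod 2) (J : Set V) : Prop where
  not_isBalancedOn : ¬ IsBalancedOn G f J
  isBalancedOn_sdiff : ∀ a ∈ J, IsBalancedOn G f (J \ {a})

namespace IsMinimalUnbalanced

variable {J : Finset V} {a : V}

theorem connected_sdiff {J : Set V} (hJ : IsMinimalUnbalanced G f J) (hT : T.Subsingleton) :
    (G.induce (J \ T)).Connected := by
  have hne : (J \ T).Nonempty := by
    rw [Set.nonempty_iff_ne_empty, Ne, Set.sdiff_eq_empty]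
    exact fun h ↦ hJ.not_isBalancedOn (isBalancedOn_of_subsingleton (hT.anti h))
  obtain ⟨z, hzJ, hzT⟩ := hne
  obtain ⟨M, hzM, hM⟩ := exists_isComponentOf_mem (G := G) (U := J \ T) ⟨hzJ, hzT⟩
  suffices h : M = J \ T from h ▸ hM.connected
  by_contra hMne
  obtain ⟨y, ⟨hyJ, hyT⟩, hyM⟩ := Set.exists_of_ssubset (hM.subset.ssubset_of_ne hMne)
  obtain ⟨p, hp⟩ := hJ.isBalancedOn_sdiff y hyJ
  obtain ⟨q, hq, hpq⟩ : ∃ q, IsPotentialOn G f (J \ {z}) q ∧ Set.EqOn p q T := by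
    obtain rfl | ⟨t, rfl⟩ := hT.eq_empty_or_singleton
    · exact (hJ.isBalancedOn_sdiff z hzJ).imp fun q hq ↦ ⟨hq, Set.eqOn_empty _ _⟩
    · obtain ⟨q, hq, hqt⟩ := (hJ.isBalancedOn_sdiff z hzJ).exists_isPotentialOn_apply_eq t (p t)
      exact ⟨q, hq, Set.eqOn_singleton.2 hqt.symm⟩
  have hMA : J ∩ (M ∪ T) ⊆ J \ {y} := fun x hx ↦ ⟨hx.1, by rintro rfl; exact hx.2.elim hyM hyT⟩
  have hMB : J \ M ⊆ J \ {z} := Set.sdiff_subset_sdiff_right (Set.singleton_subset_iff.2 hzM)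
  refine hJ.not_isBalancedOn <| (hp.mono hMA).isBalancedOn_of_eqOn_inter (hq.mono hMB) ?_ ?_
  · exact fun x hx ↦ hpq (hx.1.2.resolve_left hx.2.2)
  · intro x hx y hy hxy
    have hxM := fun h ↦ hM.mem_of_adj x h y
    have hyM := fun h ↦ hM.mem_of_adj y h x
    simp only [Set.mem_sdiff, Set.mem_inter_iff, Set.mem_union] at hxM hyM ⊢
    have := hxy.symm
    tauto

theorem label_eq_or_label_eq (hJ : IsMinimalUnbalanced G f J) (ha : a ∈ J)
    (hp : IsPotentialOn G f (J \ {a}) p) {x y z : V} (hx : x ∈ neighborsIn G J a)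
    (hy : y ∈ neighborsIn G J a) (hz : z ∈ neighborsIn G J a) (hyx : y ≠ x) (hyz : y ≠ z)
    (hxz : x ≠ z) : f s(a, y) + p y = f s(a, x) + p x ∨ f s(a, y) + p y = f s(a, z) + p z := by
  simp only [mem_neighborsIn] at hx hy hz
  have hconn := hJ.connected_sdiff (Set.subsingleton_singleton (a := a))
  obtain ⟨M, hyM, hMJ, hMxz, hM, hT⟩ := exists_connected_superset_touch (R := {x, z}) hconn
    (connected_induce_singleton y) (by simpa using ⟨hy.1, hy.2.ne'⟩)
    ⟨x, Or.inl rfl, hx.1, hx.2.ne'⟩ (by simp [hyx, hyz])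
  have hlabel : ∀ b ∈ J, ∀ c ∈ J, G.Adj a b → a ≠ c → b ≠ c → c ∉ M → Touch G M {b} →
      f s(a, y) + p y = f s(a, b) + p b := by
    intro b hb c hc hab hac hbc hcM hMb
    have hMbJ : M ∪ {b} ⊆ J \ {a} := Set.union_subset hMJ (by simpa using ⟨hb, hab.ne'⟩)
    refine (hp.mono hMbJ).label_eq_of_connected
      (connected_induce_union_of_touch hM (connected_induce_singleton b) hMb)
      ((hJ.isBalancedOn_sdiff c hc).mono ?_) (Or.inl (hyM rfl)) (Or.inr rfl) hy.2 hab
    rintro v (rfl | hv)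
    · exact ⟨ha, hac⟩
    · exact ⟨(hMbJ hv).1, by rintro rfl; exact hv.elim hcM (fun h ↦ hbc h.symm)⟩
  have hxM : x ∉ M := Set.disjoint_right.1 hMxz (by simp)
  have hzM : z ∉ M := Set.disjoint_right.1 hMxz (by simp)
  obtain ⟨m, hm, b, rfl | rfl, hmb⟩ := hT
  · exact Or.inl (hlabel b hx.1 z hz.1 hx.2 hz.2.ne hxz hzM ⟨m, hm, b, rfl, hmb⟩)
  · exact Or.inr (hlabel b hz.1 x hx.1 hz.2 hx.2.ne hxz.symm hxM ⟨m, hm, b, rfl, hmb⟩)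

theorem exists_neighborsIn_eq_pair (hJ : IsMinimalUnbalanced G f J) (ha : a ∈ J)
    (hp : IsPotentialOn G f (J \ {a}) p) :
    ∃ x y, neighborsIn G J a = {x, y} ∧ f s(a, x) + p x ≠ f s(a, y) + p y := by
  obtain ⟨x, hx, y, hy, hxy⟩ : ∃ x ∈ neighborsIn G J a, ∃ y ∈ neighborsIn G J a,
      f s(a, x) + p x ≠ f s(a, y) + p y := by
    by_contra! h
    obtain hN | ⟨x, hx⟩ := (neighborsIn G J a).eq_empty_or_nonempty
    · refine hJ.not_isBalancedOn (hp.isBalancedOn_of_label_eq (c := 0) fun y hy hay ↦ ?_)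
      simpa [hN] using mem_neighborsIn.2 ⟨hy, hay⟩
    · exact hJ.not_isBalancedOn (hp.isBalancedOn_of_label_eq fun y hy hay ↦
        h y (mem_neighborsIn.2 ⟨hy, hay⟩) x hx)
  refine ⟨x, y, Finset.Subset.antisymm (fun w hw ↦ ?_) (by simp [Finset.insert_subset_iff, hx, hy]),
    hxy⟩
  by_contra! hwxy
  simp only [Finset.mem_insert, Finset.mem_singleton, not_or] at hwxy
  have hne : x ≠ y := by
    rintro rfl
    exact hxy rfl
  have hx' := hJ.label_eq_or_label_eq ha hp hw hx hy (Ne.symm hwxy.1) hne hwxy.2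
  have hy' := hJ.label_eq_or_label_eq ha hp hw hy hx (Ne.symm hwxy.2) hne.symm hwxy.1
  generalize f s(a, x) + p x = l at hxy hx' hy'
  generalize f s(a, y) + p y = l' at hxy hx' hy'
  generalize f s(a, w) + p w = l'' at hx' hy'
  revert l l' l''
  decide

theorem card_neighborsIn (hJ : IsMinimalUnbalanced G f J) (ha : a ∈ J) :
    #(neighborsIn G J a) = 2 := by
  obtain ⟨p, hp⟩ := hJ.isBalancedOn_sdiff a ha
  obtain ⟨x, y, hxy, hne⟩ := hJ.exists_neighborsIn_eq_pair ha hp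
  rw [hxy, Finset.card_pair]
  rintro rfl
  exact hne rfl

theorem exists_isBalancedOn_deleteEdges (hJ : IsMinimalUnbalanced G f J) :
    ∃ e ∈ edgesIn G J, IsBalancedOn (G.deleteEdges {e}) f J := by
  obtain ⟨a, ha⟩ : (J : Set V).Nonempty := by
    by_contra! h
    exact hJ.not_isBalancedOn (isBalancedOn_of_subsingleton (h ▸ Set.subsingleton_empty))
  obtain ⟨p, hp⟩ := hJ.isBalancedOn_sdiff a ha
  obtain ⟨y, z, hN, -⟩ := hJ.exists_neighborsIn_eq_pair ha hp
  obtain ⟨hz, haz⟩ : z ∈ J ∧ G.Adj a z := mem_neighborsIn.1 (by simp [hN])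
  have hp' : IsPotentialOn (G.deleteEdges {s(a, z)}) f (J \ {a}) p :=
    fun u hu w hw huw ↦ hp u hu w hw (G.deleteEdges_le _ huw)
  refine ⟨s(a, z), mk_mem_edgesIn.2 ⟨⟨ha, hz⟩, haz⟩,
    hp'.isBalancedOn_of_label_eq (c := f s(a, y) + p y) fun w hw haw ↦ ?_⟩
  rw [deleteEdges_adj, Set.mem_singleton_iff] at haw
  obtain rfl | rfl : w = y ∨ w = z := by
    simpa [hN] using mem_neighborsIn.2 ⟨hw, haw.1⟩
  exacts [rfl, (haw.2 rfl).elim]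

theorem sum_edgesIn_ne_zero (hJ : IsMinimalUnbalanced G f J) : ∑ e ∈ edgesIn G J, f e ≠ 0 := by
  obtain ⟨⟨a, z⟩, he, p, hp⟩ := hJ.exists_isBalancedOn_deleteEdges
  have haz : G.Adj a z := (mk_mem_edgesIn.1 he).2
  have hsum : ∑ e ∈ edgesIn G J, ∑ x ∈ e.toFinset, p x = 0 := by
    rw [sum_edgesIn_sum_toFinset]
    refine Finset.sum_eq_zero fun x hx ↦ ?_
    rw [hJ.card_neighborsIn hx, CharTwo.two_nsmul]
  have hdefect : ∑ e ∈ edgesIn G J, (f e + ∑ x ∈ e.toFinset, p x) =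
      f s(a, z) + ∑ x ∈ s(a, z).toFinset, p x := by
    refine Finset.sum_eq_single_of_mem _ he ?_
    rintro ⟨u, w⟩ huw hne
    obtain ⟨⟨hu, hw⟩, huw⟩ := mk_mem_edgesIn.1 huw
    rw [Sym2.toFinset_mk_eq, Finset.sum_pair huw.ne,
      hp u hu w hw (deleteEdges_adj.2 ⟨huw, hne⟩), CharTwo.add_self_eq_zero]
  rw [Finset.sum_add_distrib, hsum, add_zero, Sym2.toFinset_mk_eq, Finset.sum_pair haz.ne]
    at hdefect
  intro h0
  refine hJ.not_isBalancedOn ⟨p, fun u hu w hw huw ↦ ?_⟩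
  by_cases hne : s(u, w) = s(a, z)
  · have hazp : f s(a, z) = p a + p z := CharTwo.add_eq_zero.1 (hdefect.symm.trans h0)
    obtain ⟨rfl, rfl⟩ | ⟨rfl, rfl⟩ := Sym2.eq_iff.1 hne
    · exact hazp
    · rw [hne, hazp, add_comm]
  · exact hp u hu w hw (deleteEdges_adj.2 ⟨huw, hne⟩)

end IsMinimalUnbalanced

end Potentials

/-! ### Vertex boundaries in `k`-connected graphs -/

section Boundary

variable {G : SimpleGraph V} {M : Set V} {k : ℕ}

theorem IsKConnected.le_ncard_boundary [Finite V] (hG : IsKConnected k G) (hM : M.Nonempty)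
    (hne : ∃ z, z ∉ M ∧ ¬ Touch G M {z}) : k ≤ {z | z ∉ M ∧ Touch G M {z}}.ncard := by
  by_contra! hlt
  obtain ⟨z, hzM, hzT⟩ := hne
  obtain ⟨x, hx, y, ⟨hyN, hyM⟩, hxy⟩ := touch_sdiff_of_connected (hG.2 _ (Set.toFinite _) hlt) hM
    (fun x hx h ↦ h.1 hx) (fun h ↦ hzM (h.symm ▸ fun hz ↦ hzT hz.2))
  exact hyN ⟨hyM, x, hx, y, rfl, hxy⟩

theorem IsKConnected.le_degree [Fintype V] (hG : IsKConnected k G) (x : V) : k ≤ G.degree x := by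
  have hcard : k < Fintype.card V := by simpa [Set.ncard_univ] using hG.1
  by_cases hne : ∃ z, z ∉ ({x} : Set V) ∧ ¬ Touch G {x} {z}
  · convert hG.le_ncard_boundary (Set.singleton_nonempty x) hne
    rw [← card_neighborFinset_eq_degree, ← Set.ncard_coe_finset]
    congr 1
    ext z
    simpa [Touch] using fun h : G.Adj x z ↦ h.ne'
  · have hN : G.neighborFinset x = Finset.univ.erase x := by
      ext z
      simp only [Touch, Set.mem_singleton_iff, exists_eq_left] at hne
      simpa using ⟨fun h ↦ h.ne', fun h ↦ by_contra fun hxz ↦ hne ⟨z, h, hxz⟩⟩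
    rw [← card_neighborFinset_eq_degree, hN, Finset.card_erase_of_mem (Finset.mem_univ x),
      Finset.card_univ]
    exact Nat.le_sub_one_of_lt hcard

end Boundary

/-! ### Peripheral cycles generate the cycle space -/

section Tutte

variable {G : SimpleGraph V} {f : Sym2 V → ZMod 2} {K M U : Set V} {a b c : V}

/-- An induced cycle of `G`, encoded by its vertex set. -/
structure IsInducedCycle (G : SimpleGraph V) (J : Finset V) : Prop where
  connected : (G.induce (J : Set V)).Connected
  card_neighborsIn : ∀ a ∈ J, #(neighborsIn G J a) = 2

/-- A peripheral cycle in the sense of Tutte: an induced cycle whose removal leaves a connected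
graph. -/
structure IsPeripheralCycle (G : SimpleGraph V) (J : Finset V) : Prop extends
    IsInducedCycle G J where
  connected_compl : (G.induce (J : Set V)ᶜ).Connected

/-- Normalise the potentials off `a`, `b` and `c` to agree at a point of `M`. The first two then
agree on the component of `M` off `{a, b}`, and the third continues them outside it. -/
theorem isBalancedOn_of_touch_three (hM : (G.induce M).Connected) (hMU : M ⊆ U)
    (ha : a ∈ U \ M) (hb : b ∈ U \ M) (hc : c ∈ U \ M) (hab : a ≠ b) (hac : a ≠ c) (hbc : b ≠ c)
    (haM : Touch G M {a}) (hbM : Touch G M {b}) (hcM : Touch G M {c})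
    (hUa : IsBalancedOn G f (U \ {a})) (hUb : IsBalancedOn G f (U \ {b}))
    (hUc : IsBalancedOn G f (U \ {c})) : IsBalancedOn G f U := by
  obtain ⟨w, hw⟩ := hM.nonempty
  obtain ⟨p, hp, hpw⟩ := hUa.exists_isPotentialOn_apply_eq w 0
  obtain ⟨q, hq, hqw⟩ := hUb.exists_isPotentialOn_apply_eq w 0
  obtain ⟨r, hr, hrw⟩ := hUc.exists_isPotentialOn_apply_eq w 0
  obtain ⟨N, hMN, hN⟩ := exists_isComponentOf (U := U \ {a, b}) hM
    (fun x hx ↦ ⟨hMU hx, by rintro (rfl | rfl); exacts [ha.2 hx, hb.2 hx]⟩)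
  have hcN : c ∈ N := by
    obtain ⟨m, hm, _, rfl, hmc⟩ := hcM
    exact hN.mem_of_adj m (hMN hm) _ ⟨hc.1, by simp [hac.symm, hbc.symm]⟩ hmc
  have hNa : N ⊆ U \ {a} := hN.subset.trans (Set.sdiff_subset_sdiff_right (by simp))
  have hNb : N ⊆ U \ {b} := hN.subset.trans (Set.sdiff_subset_sdiff_right (by simp))
  have hpr : p b = r b := (hp.mono (A := M ∪ {b}) (by grind)).eqOn_of_connected
    (hr.mono (by grind)) (connected_induce_union_of_touch hM (connected_induce_singleton b) hbM)
    (Or.inl hw) (hpw.trans hrw.symm) (Or.inr rfl)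
  have hqr : q a = r a := (hq.mono (A := M ∪ {a}) (by grind)).eqOn_of_connected
    (hr.mono (by grind)) (connected_induce_union_of_touch hM (connected_induce_singleton a) haM)
    (Or.inl hw) (hqw.trans hrw.symm) (Or.inr rfl)
  have hpq : Set.EqOn p q N := (hp.mono hNa).eqOn_of_connected (hq.mono hNb) hN.connected
    (hMN hw) (hpw.trans hqw.symm)
  have hcross : ∀ x ∈ N, ∀ y ∈ U \ N, G.Adj x y → f s(x, y) = p x + r y := by
    rintro x hx y ⟨hyU, hyN⟩ hxy
    obtain rfl | hya := eq_or_ne y a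
    · rw [hpq hx, ← hqr, hq x (hNb hx) y ⟨hyU, hab⟩ hxy]
    obtain rfl | hyb := eq_or_ne y b
    · rw [← hpr, hp x (hNa hx) y ⟨hyU, hya⟩ hxy]
    · exact (hyN (hN.mem_of_adj x hx y ⟨hyU, by simp [hya, hyb]⟩ hxy)).elim
  refine ⟨N.piecewise p r, fun x hx y hy hxy ↦ ?_⟩
  by_cases hxN : x ∈ N <;> by_cases hyN : y ∈ N <;> simp only [Set.piecewise, hxN, hyN, if_true,
    if_false]
  · exact hp x (hNa hxN) y (hNa hyN) hxy
  · exact hcross x hxN y ⟨hy, hyN⟩ hxy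
  · rw [Sym2.eq_swap, add_comm, hcross y hyN x ⟨hx, hxN⟩ hxy.symm]
  · exact hr x ⟨hx, fun h ↦ hxN (h ▸ hcN)⟩ y ⟨hy, fun h ↦ hyN (h ▸ hcN)⟩ hxy

theorem isBalancedOn_compl_sdiff_of_maximal
    (hK : Maximal (fun K ↦ (G.induce K).Connected ∧ ¬ IsBalancedOn G f Kᶜ) K) (ha : a ∉ K)
    (haK : Touch G K {a}) : IsBalancedOn G f (Kᶜ \ {a}) := by
  by_contra hunb
  rw [Set.sdiff_eq, ← Set.compl_union] at hunb
  exact ha <| hK.2 ⟨connected_induce_union_of_touch hK.1.1 (connected_induce_singleton a) haK, hunb⟩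
    Set.subset_union_left (Or.inr rfl)

theorem IsKConnected.touch_of_maximal [Finite V] (h3 : IsKConnected 3 G)
    (hK : Maximal (fun K ↦ (G.induce K).Connected ∧ ¬ IsBalancedOn G f Kᶜ) K) (ha : a ∉ K) :
    Touch G K {a} := by
  by_contra haK
  obtain ⟨M, haM, hM⟩ := exists_isComponentOf_mem (G := G) (U := {z | z ∉ K ∧ ¬ Touch G K {z}})
    ⟨ha, haK⟩
  have hMK : ∀ z ∉ M, Touch G M {z} → z ∉ K ∧ Touch G K {z} := by
    rintro _ hz ⟨m, hm, z, rfl, hmz⟩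
    have hzK : z ∉ K := fun hzK ↦ (hM.subset hm).2 ⟨z, hzK, m, rfl, hmz.symm⟩
    exact ⟨hzK, by_contra fun hzT ↦ hz (hM.mem_of_adj m hm z ⟨hzK, hzT⟩ hmz)⟩
  obtain ⟨k, hk⟩ := hK.1.1.nonempty
  have hkM : k ∉ M := fun h ↦ (hM.subset h).1 hk
  obtain ⟨x, y, z, hx, hy, hz, hxy, hxz, hyz⟩ := (Set.two_lt_ncard_iff).1 <|
    h3.le_ncard_boundary ⟨a, haM⟩ ⟨k, hkM, fun h ↦ (hMK k hkM h).1 hk⟩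
  have hbal : ∀ z ∉ M, Touch G M {z} → IsBalancedOn G f (Kᶜ \ {z}) := fun z hz hzM ↦
    isBalancedOn_compl_sdiff_of_maximal hK (hMK z hz hzM).1 (hMK z hz hzM).2
  exact hK.1.2 <| isBalancedOn_of_touch_three hM.connected (fun v hv ↦ (hM.subset hv).1)
    ⟨(hMK x hx.1 hx.2).1, hx.1⟩ ⟨(hMK y hy.1 hy.2).1, hy.1⟩ ⟨(hMK z hz.1 hz.2).1, hz.1⟩
    hxy hxz hyz hx.2 hy.2 hz.2 (hbal x hx.1 hx.2) (hbal y hy.1 hy.2) (hbal z hz.1 hz.2)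

theorem IsKConnected.isBalancedOn_univ [Finite V] (h3 : IsKConnected 3 G)
    (hf : ∀ J, IsPeripheralCycle G J → ∑ e ∈ edgesIn G J, f e = 0) :
    IsBalancedOn G f Set.univ := by
  have := Fintype.ofFinite V
  by_contra hunb
  obtain ⟨x, hx⟩ : ∃ x, ¬ IsBalancedOn G f {x}ᶜ := by
    by_contra! hbal
    have hmin : IsMinimalUnbalanced G f ((Finset.univ : Finset V) : Set V) :=
      ⟨by rwa [Finset.coe_univ], fun a _ ↦ (hbal a).mono fun _ h ↦ h.2⟩
    obtain ⟨a⟩ : Nonempty V := ⟨(hmin.connected_sdiff Set.subsingleton_empty).nonempty.some⟩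
    have htwo := hmin.card_neighborsIn (Finset.mem_univ a)
    have hthree := h3.le_degree a
    rw [neighborsIn_univ, card_neighborFinset_eq_degree] at htwo
    omega
  obtain ⟨K, hK⟩ := (Set.toFinite
    {K : Set V | (G.induce K).Connected ∧ ¬ IsBalancedOn G f Kᶜ}).exists_maximal
    ⟨{x}, connected_induce_singleton x, hx⟩
  have hJ : (((K.toFinset)ᶜ : Finset V) : Set V) = Kᶜ := by simp
  have hmin : IsMinimalUnbalanced G f (((K.toFinset)ᶜ : Finset V) : Set V) := by
    rw [hJ]
    exact ⟨hK.1.2, fun a ha ↦ isBalancedOn_compl_sdiff_of_maximal hK ha (h3.touch_of_maximal hK ha)⟩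
  refine hmin.sum_edgesIn_ne_zero (hf _ ⟨⟨?_, fun a ha ↦ hmin.card_neighborsIn ha⟩, ?_⟩)
  · have hconn := hmin.connected_sdiff Set.subsingleton_empty
    rwa [Set.sdiff_empty] at hconn
  · rw [hJ, compl_compl]
    exact hK.1.1

theorem finrank_add_finrank_ker_le {F E₁ E₂ E₃ : Type*} [Field F] [AddCommGroup E₁] [Module F E₁]
    [FiniteDimensional F E₁] [AddCommGroup E₂] [Module F E₂] [FiniteDimensional F E₂]
    [AddCommGroup E₃] [Module F E₃] [FiniteDimensional F E₃] (δ : E₁ →ₗ[F] E₂) (Φ : E₂ →ₗ[F] E₃)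
    (h : LinearMap.ker Φ ≤ LinearMap.range δ) :
    Module.finrank F E₂ + Module.finrank F (LinearMap.ker δ) ≤
      Module.finrank F E₁ + Module.finrank F E₃ := by
  have hδ := LinearMap.finrank_range_add_finrank_ker δ
  have hΦ := LinearMap.finrank_range_add_finrank_ker Φ
  have hker := Submodule.finrank_mono h
  have hrange := Submodule.finrank_le (LinearMap.range Φ)
  omega

variable [Fintype V]

/-- The set of peripheral cycles of a finite graph. -/
noncomputable def peripheralCycles (G : SimpleGraph V) : Finset (Finset V) :=
  {J | IsPeripheralCycle G J}

@[simp]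
theorem mem_peripheralCycles {J : Finset V} : J ∈ peripheralCycles G ↔ IsPeripheralCycle G J := by
  simp [peripheralCycles]

/-- The coboundary map of a finite graph, from vertex labellings to edge labellings over
`ZMod 2`. -/
noncomputable def coboundary (G : SimpleGraph V) :
    (V → ZMod 2) →ₗ[ZMod 2] (G.edgeFinset → ZMod 2) :=
  LinearMap.pi fun e ↦ ∑ x ∈ e.1.toFinset, LinearMap.proj x

/-- The map sending an edge labelling over `ZMod 2` to its sums along the peripheral cycles. -/
noncomputable def peripheralSum (G : SimpleGraph V) :
    (G.edgeFinset → ZMod 2) →ₗ[ZMod 2] (peripheralCycles G → ZMod 2) :=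
  LinearMap.pi fun J ↦ ∑ e with e.1 ∈ edgesIn G J.1, LinearMap.proj e

theorem coboundary_apply_mk {x y : V} (hxy : s(x, y) ∈ G.edgeFinset) (p : V → ZMod 2) :
    coboundary G p ⟨s(x, y), hxy⟩ = p x + p y := by
  have hne : x ≠ y := G.ne_of_adj (mem_edgeFinset.1 hxy)
  simp [coboundary, Sym2.toFinset_mk_eq, Finset.sum_pair hne]

theorem peripheralSum_comp_val (f : Sym2 V → ZMod 2) (J : peripheralCycles G) :
    peripheralSum G (fun e ↦ f e) J = ∑ e ∈ edgesIn G J.1, f e := by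
  simp only [peripheralSum, LinearMap.pi_apply, LinearMap.sum_apply, LinearMap.proj_apply]
  refine Finset.sum_nbij Subtype.val ?_ Subtype.val_injective.injOn ?_ (fun _ _ ↦ rfl)
  · simp
  · intro e he
    have heG : e ∈ G.edgeFinset := mem_edgeFinset.2 (Finset.mem_filter.1 he).2
    exact ⟨⟨e, heG⟩, by simpa using he, rfl⟩

theorem IsKConnected.ker_peripheralSum_le_range_coboundary (h3 : IsKConnected 3 G) :
    LinearMap.ker (peripheralSum G) ≤ LinearMap.range (coboundary G) := by
  intro g hg
  obtain ⟨f, rfl⟩ : ∃ f : Sym2 V → ZMod 2, (fun e : G.edgeFinset ↦ f e) = g :=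
    ⟨Function.extend Subtype.val g 0, funext fun e ↦ Subtype.val_injective.extend_apply g 0 e⟩
  obtain ⟨p, hp⟩ := h3.isBalancedOn_univ (f := f) fun J hJ ↦ by
    rw [← peripheralSum_comp_val f ⟨J, mem_peripheralCycles.2 hJ⟩, LinearMap.mem_ker.1 hg,
      Pi.zero_apply]
  refine ⟨p, funext ?_⟩
  rintro ⟨⟨x, y⟩, hxy⟩
  rw [coboundary_apply_mk]
  exact (hp x trivial y trivial (mem_edgeFinset.1 hxy)).symm

theorem one_le_finrank_ker_coboundary [Nonempty V] (G : SimpleGraph V) :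
    1 ≤ Module.finrank (ZMod 2) (LinearMap.ker (coboundary G)) := by
  refine Module.finrank_pos_iff_exists_ne_zero.2 ⟨⟨1, ?_⟩, ?_⟩
  · refine LinearMap.mem_ker.2 (funext ?_)
    rintro ⟨⟨x, y⟩, hxy⟩
    rw [coboundary_apply_mk]
    exact CharTwo.add_self_eq_zero 1
  · simp

theorem IsKConnected.card_edgeFinset_add_one_le (h3 : IsKConnected 3 G) :
    #G.edgeFinset + 1 ≤ #(peripheralCycles G) + Fintype.card V := by
  have : Nonempty V := Set.nonempty_iff_univ_nonempty.2 <|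
    Set.nonempty_of_ncard_ne_zero (Nat.ne_zero_of_lt h3.1)
  have hrank := finrank_add_finrank_ker_le _ _ h3.ker_peripheralSum_le_range_coboundary
  simp only [Module.finrank_fintype_fun_eq_card, Fintype.card_coe] at hrank
  have hker := one_le_finrank_ker_coboundary G
  omega

end Tutte

/-! ### Arcs of induced cycles -/

namespace IsInducedCycle

variable {G : SimpleGraph V} {J K R T : Finset V} {s g x y : V}

theorem sum_card_neighborsIn_sdiff (hJ : IsInducedCycle G J) (hR : (G.induce (R : Set V)).Connected)
    (hRJ : R ⊆ J) (hne : R ≠ J) : ∑ x ∈ R, #(neighborsIn G (J \ R) x) = 2 := by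
  have hdeg : ∑ x ∈ R, #(neighborsIn G R x) + ∑ x ∈ R, #(neighborsIn G (J \ R) x) = 2 * #R := by
    rw [← Finset.sum_add_distrib, mul_comm, ← smul_eq_mul, ← Finset.sum_const]
    refine Finset.sum_congr rfl fun x hx ↦ ?_
    rw [card_neighborsIn_add_card_neighborsIn_sdiff hRJ, hJ.card_neighborsIn x (hRJ hx)]
  have htree := card_le_card_edgesIn_add_one hR
  obtain ⟨x, hx, y, hy, hxy⟩ := touch_sdiff_of_connected hJ.connected
    (Set.nonempty_coe_sort.1 hR.nonempty) (Finset.coe_subset.2 hRJ)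
    (fun h ↦ hne (Finset.coe_injective h))
  have hcut : 0 < ∑ x ∈ R, #(neighborsIn G (J \ R) x) :=
    Finset.sum_pos' (fun _ _ ↦ Nat.zero_le _)
      ⟨x, hx, Finset.card_pos.2 ⟨y, mem_neighborsIn.2 ⟨by simpa using hy, hxy⟩⟩⟩
  rw [← two_mul_card_edgesIn] at hdeg
  omega

theorem sum_card_neighborsIn_of_isComponentOf (hJ : IsInducedCycle G J) (hTJ : T ⊆ J)
    (hT : T.Nonempty) (hR : IsComponentOf G R ((J : Set V) \ T)) :
    ∑ t ∈ T, #(neighborsIn G R t) = 2 := by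
  have hRJ : R ⊆ J := fun x hx ↦ (hR.subset hx).1
  obtain ⟨t, ht⟩ := hT
  have hne : R ≠ J := by
    rintro rfl
    exact (hR.subset (hTJ ht)).2 ht
  rw [sum_card_neighborsIn_comm, ← hJ.sum_card_neighborsIn_sdiff hR.connected hRJ hne]
  refine Finset.sum_congr rfl fun x hx ↦ congrArg _ (Finset.ext fun u ↦ ?_)
  have hxu := fun h ↦ hR.mem_of_adj x hx u h
  have huR := fun h : u ∈ R ↦ hR.subset h
  have huT := @hTJ u
  simp only [mem_neighborsIn, Finset.mem_sdiff, Set.mem_sdiff, Finset.mem_coe] at *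
  tauto

theorem connected_sdiff (hJ : IsInducedCycle G J) (hT : (G.induce (T : Set V)).Connected)
    (hTJ : T ⊆ J) (hne : T ≠ J) : (G.induce ((J : Set V) \ T)).Connected := by
  have hT₀ : T.Nonempty := Set.nonempty_coe_sort.1 hT.nonempty
  have hfin : ((J : Set V) \ T).Finite := J.finite_toSet.sdiff
  obtain ⟨z, hzJ, hzT⟩ := Finset.exists_of_ssubset (hTJ.ssubset_of_ne hne)
  obtain ⟨M, -, hM⟩ := exists_finset_isComponentOf_mem (G := G) hfin ⟨hzJ, hzT⟩
  suffices h : (M : Set V) = ↑J \ ↑T from h ▸ hM.connected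
  by_contra hMne
  obtain ⟨w, hw, hwM⟩ := Set.exists_of_ssubset (hM.subset.ssubset_of_ne hMne)
  obtain ⟨N, hwN, hN⟩ := exists_finset_isComponentOf_mem (G := G) hfin hw
  have hMN : Disjoint M N := by
    by_contra h
    rw [← Finset.disjoint_coe, Set.not_disjoint_iff_nonempty_inter] at h
    exact hwM (hM.eq_of_not_disjoint hN h ▸ hwN)
  have hle : ∑ t ∈ T, (#(neighborsIn G M t) + #(neighborsIn G N t)) ≤
      ∑ t ∈ T, #(neighborsIn G (J \ T) t) := by
    refine Finset.sum_le_sum fun t _ ↦ ?_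
    rw [neighborsIn, neighborsIn, ← Finset.card_union_of_disjoint
      (Finset.disjoint_filter_filter hMN), ← Finset.filter_union]
    exact Finset.card_le_card (neighborsIn_mono (Finset.union_subset
      (fun u hu ↦ by simpa using hM.subset hu) (fun u hu ↦ by simpa using hN.subset hu)) t)
  rw [Finset.sum_add_distrib, hJ.sum_card_neighborsIn_of_isComponentOf hTJ hT₀ hM,
    hJ.sum_card_neighborsIn_of_isComponentOf hTJ hT₀ hN,
    hJ.sum_card_neighborsIn_sdiff hT hTJ hne] at hle
  omega

theorem touch_of_isComponentOf {R : Set V} (hJ : IsInducedCycle G J) (hs : s ∈ J) (hg : g ∈ J)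
    (hsg : s ≠ g) (hR : IsComponentOf G R ((J : Set V) \ {s, g})) : Touch G {s} R := by
  have hconn : (G.induce ((J : Set V) \ {g})).Connected := by
    rw [← Finset.coe_singleton]
    refine hJ.connected_sdiff ?_ (Finset.singleton_subset_iff.2 hg) ?_
    · rw [Finset.coe_singleton]
      exact connected_induce_singleton g
    · rintro rfl
      exact hsg (Finset.mem_singleton.1 hs)
  obtain ⟨x, hx, y, ⟨⟨hyJ, hyg⟩, hyR⟩, hxy⟩ := touch_sdiff_of_connected hconn hR.nonempty
    (hR.subset.trans (Set.sdiff_subset_sdiff_right (by simp)))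
    (fun h ↦ (hR.subset (h.symm ▸ ⟨hs, hsg⟩ : s ∈ R)).2 (by simp))
  have hys : y = s := by
    by_contra hys
    exact hyR (hR.mem_of_adj x hx y ⟨hyJ, by simpa using ⟨hys, hyg⟩⟩ hxy)
  exact ⟨y, hys, x, hx, hxy.symm⟩

theorem card_neighborsIn_of_isComponentOf (hJ : IsInducedCycle G J) (hs : s ∈ J) (hg : g ∈ J)
    (hsg : s ≠ g) (hR : IsComponentOf G R ((J : Set V) \ {s, g})) : #(neighborsIn G R s) = 1 := by
  have hcut : ∑ t ∈ {s, g}, #(neighborsIn G R t) = 2 :=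
    hJ.sum_card_neighborsIn_of_isComponentOf (by simp [Finset.insert_subset_iff, hs, hg])
      (by simp) (by simpa using hR)
  have hs' := hJ.touch_of_isComponentOf hs hg hsg hR
  have hg' := hJ.touch_of_isComponentOf hg hs hsg.symm (by rwa [Set.pair_comm])
  rw [touch_singleton_iff_neighborsIn_nonempty, ← Finset.card_pos] at hs' hg'
  rw [Finset.sum_pair hsg] at hcut
  omega

theorem exists_arcs (hJ : IsInducedCycle G J) (hs : s ∈ J) (hg : g ∈ J) (hsg : s ≠ g)
    (hadj : ¬ G.Adj s g) : ∃ α β : Set V, IsComponentOf G α (↑J \ {s, g}) ∧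
      IsComponentOf G β (↑J \ {s, g}) ∧ Disjoint α β ∧ (J : Set V) \ {s, g} ⊆ α ∪ β := by
  obtain ⟨x, y, hxy, hN⟩ := Finset.card_eq_two.1 (hJ.card_neighborsIn s hs)
  have harc : ∀ z ∈ neighborsIn G J s,
      G.Adj s z ∧ ∃ α : Finset V, z ∈ α ∧ IsComponentOf G α (↑J \ {s, g}) := by
    intro z hz
    obtain ⟨hzJ, hsz⟩ := mem_neighborsIn.1 hz
    exact ⟨hsz, exists_finset_isComponentOf_mem J.finite_toSet.sdiff
      ⟨hzJ, by rintro (rfl | rfl); exacts [hsz.ne rfl, hadj hsz]⟩⟩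
  obtain ⟨hsx, α, hxα, hα⟩ := harc x (by simp [hN])
  obtain ⟨hsy, β, hyβ, hβ⟩ := harc y (by simp [hN])
  refine ⟨α, β, hα, hβ, by_contra fun h ↦ hxy ?_, fun z hz ↦ ?_⟩
  · have hyα : y ∈ α := by
      rw [← Finset.mem_coe, hα.eq_of_not_disjoint hβ (Set.not_disjoint_iff_nonempty_inter.1 h)]
      exact hyβ
    exact Finset.card_le_one.1 (hJ.card_neighborsIn_of_isComponentOf hs hg hsg hα).le
      x (mem_neighborsIn.2 ⟨hxα, hsx⟩) y (mem_neighborsIn.2 ⟨hyα, hsy⟩)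
  · obtain ⟨γ, hzγ, hγ⟩ := exists_isComponentOf_mem (G := G) hz
    obtain ⟨_, rfl, u, huγ, hsu⟩ := hJ.touch_of_isComponentOf hs hg hsg hγ
    obtain rfl | rfl : u = x ∨ u = y := by
      simpa [hN] using mem_neighborsIn.2 ⟨(hγ.subset huγ).1, hsu⟩
    · exact Or.inl (hγ.eq_of_not_disjoint hα ⟨u, huγ, hxα⟩ ▸ hzγ)
    · exact Or.inr (hγ.eq_of_not_disjoint hβ ⟨u, huγ, hyβ⟩ ▸ hzγ)

theorem three_le_card (hJ : IsInducedCycle G J) : 3 ≤ #J := by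
  obtain ⟨a, ha⟩ := Set.nonempty_coe_sort.1 hJ.connected.nonempty
  have hN : neighborsIn G J a ⊂ J := (Finset.ssubset_iff_of_subset (Finset.filter_subset _ _)).2
    ⟨a, ha, by simp⟩
  exact (hJ.card_neighborsIn a ha).symm.trans_lt (Finset.card_lt_card hN)

theorem card_edgesIn (hJ : IsInducedCycle G J) : #(edgesIn G J) = #J := by
  have hsum := two_mul_card_edgesIn G J
  rw [Finset.sum_congr rfl hJ.card_neighborsIn, Finset.sum_const, smul_eq_mul] at hsum
  omega

theorem isNClique_three (hJ : IsInducedCycle G J) (hcard : #J = 3) : G.IsNClique 3 J := by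
  refine ⟨fun a ha b hb hab ↦ ?_, hcard⟩
  have hN : neighborsIn G J a = J.erase a := by
    refine Finset.eq_of_subset_of_card_le (fun x hx ↦ ?_) ?_
    · obtain ⟨hxJ, hax⟩ := mem_neighborsIn.1 hx
      exact Finset.mem_erase.2 ⟨hax.ne', hxJ⟩
    · rw [hJ.card_neighborsIn a ha, Finset.card_erase_of_mem ha, hcard]
  exact (mem_neighborsIn.1 (hN ▸ Finset.mem_erase.2 ⟨hab.symm, hb⟩)).2

theorem eq_of_subset (hJ : IsInducedCycle G J) (hK : IsInducedCycle G K) (h : J ⊆ K) : J = K := by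
  by_contra hne
  have hcut := hK.sum_card_neighborsIn_sdiff hJ.connected h hne
  rw [Finset.sum_eq_zero fun x hx ↦ ?_] at hcut
  · omega
  · have hsplit := card_neighborsIn_add_card_neighborsIn_sdiff (G := G) h x
    rw [hJ.card_neighborsIn x hx, hK.card_neighborsIn x (h hx)] at hsplit
    omega

end IsInducedCycle

/-! ### Peripheral cycles of planar graphs -/

section PeripheralIntersection

variable {G : SimpleGraph V} {J K : Finset V} {L R : Set V} {s g x y : V}

theorem connected_induce_union_of_mem_or_touch {T : Set V} (hL : (G.induce L).Connected)
    (h : ∀ x ∈ T, x ∈ L ∨ Touch G L {x}) : (G.induce (L ∪ T)).Connected := by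
  obtain ⟨M, hLM, hM⟩ := exists_isComponentOf (U := L ∪ T) hL Set.subset_union_left
  have hTM : T ⊆ M := fun x hx ↦ (h x hx).elim (fun hxL ↦ hLM hxL)
    fun ⟨l, hl, _, hxx, hlx⟩ ↦ hM.mem_of_adj l (hLM hl) x (Or.inr hx) (hxx ▸ hlx)
  rw [← hM.subset.antisymm (Set.union_subset hLM hTM)]
  exact hM.connected

theorem IsPeripheralCycle.exists_connected_touch_arcs (hJ : IsPeripheralCycle G J) {α β : Set V}
    (hα : IsComponentOf G α (↑J \ {s, g})) (hβ : IsComponentOf G β (↑J \ {s, g}))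
    (hαβ : Disjoint α β) (hcover : (J : Set V) \ {s, g} ⊆ α ∪ β) (hR : R.Nonempty)
    (hRJ : Disjoint R J) (hL : (G.induce L).Connected) (hLR : Disjoint L R) (hsL : s ∉ L)
    (hgL : g ∉ L) (hJL : ∀ x ∈ J, x ∈ L ∨ Touch G L {x}) :
    ∃ Y ⊆ (J : Set V)ᶜ, (G.induce Y).Connected ∧ Disjoint Y R ∧
      Touch G Y α ∧ Touch G Y β ∧ Touch G Y R := by
  have hαβT : ¬ Touch G α β := fun ⟨a, ha, b, hb, hab⟩ ↦
    Set.disjoint_left.1 hαβ (hα.mem_of_adj a ha b (hβ.subset hb) hab) hb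
  obtain ⟨Z, hZU, hZα, hZβ, hZ, hZα', hZβ'⟩ := exists_connected_touch_touch
    (connected_induce_union_of_mem_or_touch hL fun x (hx : x ∈ (J : Set V) \ {s, g}) ↦ hJL x hx.1)
    hα.connected (hα.subset.trans Set.subset_union_right)
    (hβ.nonempty.mono (Set.subset_inter subset_rfl (hβ.subset.trans Set.subset_union_right)))
    hαβ hαβT
  have hZarc : ∀ z ∈ Z, z ∉ (J : Set V) \ {s, g} := fun z hz hzJ ↦
    (hcover hzJ).elim (Set.disjoint_left.1 hZα hz) (Set.disjoint_left.1 hZβ hz)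
  have hZL : Z ⊆ L := fun z hz ↦ (hZU hz).resolve_right (hZarc z hz)
  have hZJ : Z ⊆ (J : Set V)ᶜ := fun z hz hzJ ↦
    hZarc z hz ⟨hzJ, by rintro (rfl | rfl); exacts [hsL (hZL hz), hgL (hZL hz)]⟩
  obtain ⟨Y, hZY, hYJ, hYR, hY, hYR'⟩ := exists_connected_superset_touch (R := R) hJ.connected_compl
    hZ hZJ (hR.mono (Set.subset_inter subset_rfl (Set.subset_compl_iff_disjoint_right.2 hRJ)))
    (hLR.mono_left hZL)
  exact ⟨Y, hYJ, hY, hYR, hZα'.mono hZY subset_rfl, hZβ'.mono hZY subset_rfl, hYR'⟩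

theorem IsPeripheralCycle.hasMinor_of_not_adj (hJ : IsPeripheralCycle G J) (hs : s ∈ J)
    (hg : g ∈ J) (hsg : s ≠ g) (hadj : ¬ G.Adj s g) (hR : (G.induce R).Connected)
    (hRJ : Disjoint R J) (hsR : Touch G {s} R) (hgR : Touch G {g} R)
    (hL : (G.induce L).Connected) (hLR : Disjoint L R) (hsL : s ∉ L) (hgL : g ∉ L)
    (hJL : ∀ x ∈ J, x ∈ L ∨ Touch G L {x}) :
    HasMinor G (completeBipartiteGraph (Fin 3) (Fin 3)) := by
  obtain ⟨α, β, hα, hβ, hαβ, hcover⟩ := hJ.exists_arcs hs hg hsg hadj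
  obtain ⟨Y, hYJ, hY, hYR, hYα, hYβ, hYR'⟩ := hJ.exists_connected_touch_arcs hα hβ hαβ hcover
    (Set.nonempty_coe_sort.1 hR.nonempty) hRJ hL hLR hsL hgL hJL
  have harc : ∀ {γ : Set V}, IsComponentOf G γ (↑J \ {s, g}) → s ∉ γ ∧ g ∉ γ ∧
      Touch G {s} γ ∧ Touch G {g} γ ∧ Disjoint Y γ ∧ Disjoint γ R := fun {γ} hγ ↦
    have hγJ : γ ⊆ J := hγ.subset.trans Set.sdiff_subset
    ⟨fun h ↦ (hγ.subset h).2 (by simp), fun h ↦ (hγ.subset h).2 (by simp),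
      hJ.touch_of_isComponentOf hs hg hsg hγ,
      hJ.touch_of_isComponentOf hg hs hsg.symm (by rwa [Set.pair_comm]),
      (Set.subset_compl_iff_disjoint_right.1 hYJ).mono_right hγJ, hRJ.symm.mono_left hγJ⟩
  obtain ⟨hsα, hgα, hsα', hgα', hYα', hαR⟩ := harc hα
  obtain ⟨hsβ, hgβ, hsβ', hgβ', hYβ', hβR⟩ := harc hβ
  have hsR' : s ∉ R := fun h ↦ Set.disjoint_left.1 hRJ h hs
  have hgR' : g ∉ R := fun h ↦ Set.disjoint_left.1 hRJ h hg
  refine hasMinor_completeBipartiteGraph_three (B := ![α, β, R]) hsg hY ?_ (fun h ↦ hYJ h hs)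
    (fun h ↦ hYJ h hg) ?_ ?_ ?_ ?_ ?_ ?_ ?_
  · simp [Fin.forall_fin_succ, hα.connected, hβ.connected, hR]
  · simp [Fin.forall_fin_succ, hsα, hsβ, hsR']
  · simp [Fin.forall_fin_succ, hgα, hgβ, hgR']
  · simp [Fin.forall_fin_succ, hYα', hYβ', hYR]
  · simp [pairwise_fin_succ_iff, Function.onFun, Fin.forall_fin_succ, Subsingleton.pairwise, hαβ,
      hαβ.symm, hαR, hαR.symm, hβR, hβR.symm]
  · simp [Fin.forall_fin_succ, hsα', hsβ', hsR]
  · simp [Fin.forall_fin_succ, hgα', hgβ', hgR]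
  · simp [Fin.forall_fin_succ, hYα, hYβ, hYR']

theorem IsComponentOf.exists_mem_inter_touch {A B M T : Set V} (hM : IsComponentOf G M (A \ B))
    (hT : T ⊂ A ∩ B) (hconn : (G.induce (A \ T)).Connected) :
    ∃ t ∈ A ∩ B, t ∉ T ∧ Touch G {t} M := by
  obtain ⟨u, hu, huT⟩ := Set.exists_of_ssubset hT
  obtain ⟨m, hm, t, ⟨⟨htA, htT⟩, htM⟩, hmt⟩ := touch_sdiff_of_connected hconn hM.nonempty
    (hM.subset.trans (Set.sdiff_subset_sdiff_right (hT.subset.trans Set.inter_subset_right)))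
    (fun h ↦ (hM.subset (h.symm ▸ ⟨hu.1, huT⟩ : u ∈ M)).2 hu.2)
  have htB : t ∈ B := by_contra fun htB ↦ htM (hM.mem_of_adj m hm t ⟨htA, htB⟩ hmt)
  exact ⟨t, ⟨htA, htB⟩, htT, t, rfl, m, hm, hmt.symm⟩

theorem IsInducedCycle.touch_compl [Fintype V] (hJ : IsInducedCycle G J) (hx : x ∈ J)
    (hdeg : 3 ≤ G.degree x) : Touch G (J : Set V)ᶜ {x} := by
  refine Touch.symm ?_
  have hsplit := card_neighborsIn_add_card_neighborsIn_sdiff (G := G) (Finset.subset_univ J) x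
  rw [hJ.card_neighborsIn x hx, neighborsIn_univ, card_neighborFinset_eq_degree] at hsplit
  rw [← Finset.coe_compl, touch_singleton_iff_neighborsIn_nonempty, ← Finset.card_pos,
    Finset.compl_eq_univ_sdiff]
  omega

theorem IsPeripheralCycle.adj_of_touch [Fintype V] (hJ : IsPeripheralCycle G J)
    (hK : IsPeripheralCycle G K) (hdeg : ∀ x, 3 ≤ G.degree x)
    (hG : ¬ HasMinor G (completeBipartiteGraph (Fin 3) (Fin 3)))
    (hR : IsComponentOf G R (↑J \ ↑K)) (hs : s ∈ (J ∩ K : Set V)) (hg : g ∈ (J ∩ K : Set V))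
    (hsg : s ≠ g) (hsR : Touch G {s} R) (hgR : Touch G {g} R) : G.Adj s g := by
  by_contra hadj
  refine hG <| hK.hasMinor_of_not_adj hs.2 hg.2 hsg hadj hR.connected
    (Set.disjoint_left.2 fun x hx ↦ (hR.subset hx).2) hsR hgR hJ.connected_compl
    (Set.disjoint_left.2 fun x hxJ hx ↦ hxJ (hR.subset hx).1) (fun h ↦ h hs.1) (fun h ↦ h hg.1)
    fun x _ ↦ ?_
  by_cases hx : x ∈ J
  exacts [Or.inr (hJ.touch_compl hx (hdeg x)), Or.inl hx]

/-- Otherwise a component of `J \ K` would have three attachments in `J ∩ K`, pairwise adjacent by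
`IsPeripheralCycle.adj_of_touch`, so one of them would have three neighbours on `J`. -/
theorem IsPeripheralCycle.card_inter_le_two [Fintype V] (hJ : IsPeripheralCycle G J)
    (hK : IsPeripheralCycle G K) (hJK : J ≠ K) (hdeg : ∀ x, 3 ≤ G.degree x)
    (hG : ¬ HasMinor G (completeBipartiteGraph (Fin 3) (Fin 3))) : #(J ∩ K) ≤ 2 := by
  by_contra! hcard
  obtain ⟨z, hzJ, hzK⟩ : ∃ z ∈ J, z ∉ K := by
    by_contra! h
    exact hJK (hJ.eq_of_subset hK.toIsInducedCycle h)
  obtain ⟨R, -, hR⟩ := exists_isComponentOf_mem (G := G) (U := (J : Set V) \ K) ⟨hzJ, hzK⟩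
  have hattach : ∀ T ⊆ J ∩ K, #T ≤ 2 → (T.Nonempty → (G.induce (T : Set V)).Connected) →
      ∃ t ∈ (J ∩ K : Set V), t ∉ T ∧ Touch G {t} R := by
    intro T hT hTcard hTconn
    have hne : T ≠ J ∩ K := fun h ↦ by simp [← h, hTcard.not_gt] at hcard
    refine hR.exists_mem_inter_touch (by exact_mod_cast hT.ssubset_of_ne hne) ?_
    obtain rfl | hT₀ := T.eq_empty_or_nonempty
    · rw [Finset.coe_empty, Set.sdiff_empty]
      exact hJ.connected
    · refine hJ.connected_sdiff (hTconn hT₀) (hT.trans Finset.inter_subset_left) ?_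
      rintro rfl
      exact hne (hT.antisymm Finset.inter_subset_left)
  obtain ⟨t₁, ht₁, -, ht₁R⟩ := hattach ∅ (by simp) (by simp) (by simp)
  obtain ⟨t₂, ht₂, ht₂₁, ht₂R⟩ := hattach {t₁} (by simpa using ht₁) (by simp)
    (fun _ ↦ by rw [Finset.coe_singleton]; exact connected_induce_singleton t₁)
  rw [Finset.mem_singleton] at ht₂₁
  have h₁₂ : G.Adj t₁ t₂ := hJ.adj_of_touch hK hdeg hG hR ht₁ ht₂ (Ne.symm ht₂₁) ht₁R ht₂R
  obtain ⟨t₃, ht₃, ht₃₁₂, ht₃R⟩ := hattach {t₁, t₂}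
    (by simpa [Finset.insert_subset_iff] using ⟨ht₁, ht₂⟩) Finset.card_le_two
    (fun _ ↦ by
      rw [Finset.coe_pair]
      exact induce_pair_connected_of_adj h₁₂)
  simp only [Finset.mem_insert, Finset.mem_singleton, not_or] at ht₃₁₂
  have h₁₃ : G.Adj t₁ t₃ := hJ.adj_of_touch hK hdeg hG hR ht₁ ht₃ (Ne.symm ht₃₁₂.1) ht₁R ht₃R
  obtain ⟨t₁, rfl, r, hr, h₁r⟩ := ht₁R
  obtain ⟨hrJ, hrK⟩ := hR.subset hr
  have hthree : #{t₂, t₃, r} ≤ #(neighborsIn G J t₁) := Finset.card_le_card <| by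
    simpa [Finset.insert_subset_iff, h₁₂, h₁₃, h₁r] using ⟨ht₂.1, ht₃.1, hrJ⟩
  rw [hJ.card_neighborsIn t₁ ht₁.1, Finset.card_eq_three.2 ⟨t₂, t₃, r, Ne.symm ht₃₁₂.2,
    fun h ↦ hrK (h ▸ ht₂.2), fun h ↦ hrK (h ▸ ht₃.2), rfl⟩] at hthree
  omega

end PeripheralIntersection

section ThreePeripheralCycles

variable {G : SimpleGraph V}

theorem exists_link (G : SimpleGraph V) {A B U : Set V} (hU : (G.induce U).Connected)
    (hA : (G.induce A).Connected) (hAU : A ⊆ U) (hBU : (B ∩ U).Nonempty) (hAB : Disjoint A B) :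
    ∃ Z ⊆ U, Disjoint Z A ∧ Disjoint Z B ∧ (G.induce (A ∪ Z)).Connected ∧ Touch G (A ∪ Z) B ∧
      (Z.Nonempty → (G.induce Z).Connected ∧ Touch G Z A ∧ Touch G Z B) := by
  by_cases hT : Touch G A B
  · exact ⟨∅, U.empty_subset, Set.empty_disjoint A, Set.empty_disjoint B, by rwa [Set.union_empty],
      by rwa [Set.union_empty], fun h ↦ (Set.not_nonempty_empty h).elim⟩
  · obtain ⟨Z, hZU, hZA, hZB, hZ, hZA', hZB'⟩ := exists_connected_touch_touch hU hA hAU hBU hAB hT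
    exact ⟨Z, hZU, hZA, hZB, connected_induce_union_of_touch hA hZ hZA'.symm,
      hZB'.mono Set.subset_union_right subset_rfl, fun _ ↦ ⟨hZ, hZA', hZB'⟩⟩

/-- Three connected sets `A 0`, `A 1`, `A 2` that touch both ends of the edge `x y`, any two of
which are linked off the third: the links either meet and give a `K₃,₃`, or give a `K₅`. -/
theorem hasMinor_of_links {x y : V} (hxy : G.Adj x y) {A Z : Fin 3 → Set V}
    (hA : ∀ i, (G.induce (A i)).Connected) (hAA : Pairwise (Function.onFun Disjoint A))
    (hxA : ∀ i, x ∉ A i) (hyA : ∀ i, y ∉ A i)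
    (hxT : ∀ i, Touch G {x} (A i)) (hyT : ∀ i, Touch G {y} (A i))
    (hxZ : ∀ i, x ∉ Z i) (hyZ : ∀ i, y ∉ Z i) (hZA : ∀ i j, Disjoint (Z i) (A j))
    (hAZ : ∀ i, (G.induce (A i ∪ Z i)).Connected) (hAZT : ∀ i, Touch G (A i ∪ Z i) (A (i + 1)))
    (hZ : ∀ i, (Z i).Nonempty →
      (G.induce (Z i)).Connected ∧ Touch G (Z i) (A i) ∧ Touch G (Z i) (A (i + 1))) :
    HasMinor G (completeGraph (Fin 5)) ∨
      HasMinor G (completeBipartiteGraph (Fin 3) (Fin 3)) := by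
  by_cases hZZ : Pairwise (Function.onFun Disjoint Z)
  · left
    have hmodel : IsCompleteModel G fun i ↦ A i ∪ Z i := by
      refine ⟨hAZ, fun i j hij ↦ ?_, fun i j hij ↦ ?_⟩
      · simp only [Function.onFun, Set.disjoint_union_left, Set.disjoint_union_right]
        exact ⟨⟨hAA hij, hZA i j⟩, (hZA j i).symm, hZZ hij⟩
      · obtain rfl | rfl : j = i + 1 ∨ i = j + 1 := by omega
        · exact (hAZT i).mono subset_rfl Set.subset_union_left
        · exact ((hAZT j).mono subset_rfl Set.subset_union_left).symm
    have hymodel := hmodel.cons (connected_induce_singleton y) (by simp [hyA, hyZ])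
      fun i ↦ (hyT i).mono subset_rfl Set.subset_union_left
    exact (hymodel.cons (connected_induce_singleton x)
      (Fin.cases (by simpa using hxy.ne) (by simp [hxA, hxZ]))
      (Fin.cases ⟨x, rfl, y, rfl, hxy⟩
        fun i ↦ (hxT i).mono subset_rfl Set.subset_union_left)).hasMinor
  · right
    simp only [Pairwise, Function.onFun, not_forall, Set.not_disjoint_iff_nonempty_inter] at hZZ
    obtain ⟨i, j, hij, hZij⟩ := hZZ
    obtain ⟨hZi, hZiA, hZiA'⟩ := hZ i (hZij.mono Set.inter_subset_left)
    obtain ⟨hZj, hZjA, hZjA'⟩ := hZ j (hZij.mono Set.inter_subset_right)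
    refine hasMinor_completeBipartiteGraph_three hxy.ne (induce_union_connected hZi.preconnected
      hZj.preconnected hZij) hA
      (by simp [hxZ]) (by simp [hyZ]) hxA hyA (by simp [hZA]) hAA hxT hyT fun k ↦ ?_
    obtain rfl | rfl | rfl | rfl : k = i ∨ k = i + 1 ∨ k = j ∨ k = j + 1 := by omega
    exacts [hZiA.mono Set.subset_union_left subset_rfl, hZiA'.mono Set.subset_union_left subset_rfl,
      hZjA.mono Set.subset_union_right subset_rfl, hZjA'.mono Set.subset_union_right subset_rfl]

theorem IsPeripheralCycle.hasMinor_of_inter_eq_pair {J : Fin 3 → Finset V} {x y : V}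
    (hJ : ∀ i, IsPeripheralCycle G (J i)) (hxy : G.Adj x y)
    (hJJ : Pairwise fun i j ↦ J i ∩ J j = {x, y}) :
    HasMinor G (completeGraph (Fin 5)) ∨
      HasMinor G (completeBipartiteGraph (Fin 3) (Fin 3)) := by
  have hpair : ∀ i, {x, y} ⊆ J i := fun i ↦
    hJJ (show i ≠ i + 1 by omega) ▸ Finset.inter_subset_left
  have hx : ∀ i, x ∈ J i := fun i ↦ hpair i (by simp)
  have hy : ∀ i, y ∈ J i := fun i ↦ hpair i (by simp)
  set A : Fin 3 → Set V := fun i ↦ ↑(J i) \ {x, y} with hAdef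
  have hAJ : ∀ i, A i ⊆ J i := fun i ↦ Set.sdiff_subset
  have hA : ∀ i, IsComponentOf G (A i) (A i) := fun i ↦ by
    refine ⟨subset_rfl, ?_, fun _ _ _ hz _ ↦ hz⟩
    rw [hAdef, ← Finset.coe_pair]
    refine (hJ i).connected_sdiff ?_ (hpair i) fun h ↦ ?_
    · rw [Finset.coe_pair]
      exact induce_pair_connected_of_adj hxy
    · exact (hJ i).three_le_card.not_gt (h ▸ Nat.lt_succ_of_le Finset.card_le_two)
  have hdisj : ∀ {i j}, i ≠ j → Disjoint (A i) (J j) := fun {i j} hij ↦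
    Set.disjoint_left.2 fun z hz hzj ↦ hz.2 <| by
      simpa [hJJ hij] using Finset.mem_inter.2 ⟨hAJ i hz, hzj⟩
  choose Z hZU hZA hZB hAZ hAZT hZ using fun i : Fin 3 ↦
    exists_link G (A := A i) (B := A (i + 1)) (hJ (i + 2)).connected_compl (hA i).connected
      (Set.subset_compl_iff_disjoint_right.2 (hdisj (by omega)))
      ((hA (i + 1)).nonempty.mono (Set.subset_inter subset_rfl
        (Set.subset_compl_iff_disjoint_right.2 (hdisj (by omega)))))
      ((hdisj (by omega)).mono_right (hAJ _))
  refine hasMinor_of_links hxy (fun i ↦ (hA i).connected)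
    (fun i j hij ↦ (hdisj hij).mono_right (hAJ j)) (by simp [hAdef]) (by simp [hAdef])
    (fun i ↦ (hJ i).touch_of_isComponentOf (hx i) (hy i) hxy.ne (hA i))
    (fun i ↦ (hJ i).touch_of_isComponentOf (hy i) (hx i) hxy.ne'
      (Set.pair_comm x y ▸ hA i)) (fun i h ↦ hZU i h (hx _)) (fun i h ↦ hZU i h (hy _))
    (fun i j ↦ ?_) hAZ hAZT hZ
  obtain rfl | rfl | rfl : j = i ∨ j = i + 1 ∨ j = i + 2 := by omega
  exacts [hZA j, hZB i, (Set.subset_compl_iff_disjoint_right.1 (hZU i)).mono_right (hAJ _)]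

variable [Fintype V]

theorem IsPeripheralCycle.inter_eq_pair {J K : Finset V} {x y : V} (hJ : IsPeripheralCycle G J)
    (hK : IsPeripheralCycle G K) (hJK : J ≠ K) (hdeg : ∀ x, 3 ≤ G.degree x)
    (hG : ¬ HasMinor G (completeBipartiteGraph (Fin 3) (Fin 3)))
    (hxyJ : s(x, y) ∈ edgesIn G J) (hxyK : s(x, y) ∈ edgesIn G K) : J ∩ K = {x, y} := by
  obtain ⟨⟨hxJ, hyJ⟩, hxy⟩ := mk_mem_edgesIn.1 hxyJ
  obtain ⟨⟨hxK, hyK⟩, -⟩ := mk_mem_edgesIn.1 hxyK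
  refine (Finset.eq_of_subset_of_card_le ?_ ?_).symm
  · simp [Finset.insert_subset_iff, *]
  · rw [Finset.card_pair hxy.ne]
    exact hJ.card_inter_le_two hK hJK hdeg hG

theorem IsPlanar.card_filter_mem_edgesIn_le_two (hG : IsPlanar G) (hdeg : ∀ x, 3 ≤ G.degree x)
    (e : Sym2 V) : #{J ∈ peripheralCycles G | e ∈ edgesIn G J} ≤ 2 := by
  by_contra! hlt
  obtain ⟨J₁, J₂, J₃, h₁, h₂, h₃, h₁₂, h₁₃, h₂₃⟩ := Finset.two_lt_card_iff.1 hlt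
  simp only [Finset.mem_filter, mem_peripheralCycles] at h₁ h₂ h₃
  induction e with | _ x y
  have hinter : ∀ {J K}, IsPeripheralCycle G J ∧ s(x, y) ∈ edgesIn G J →
      IsPeripheralCycle G K ∧ s(x, y) ∈ edgesIn G K → J ≠ K → J ∩ K = {x, y} :=
    fun hJ hK hJK ↦ hJ.1.inter_eq_pair hK.1 hJK hdeg hG.2 hJ.2 hK.2
  refine (IsPeripheralCycle.hasMinor_of_inter_eq_pair (J := ![J₁, J₂, J₃]) ?_
    (mk_mem_edgesIn.1 h₁.2).2 ?_).elim hG.1 hG.2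
  · simp [Fin.forall_fin_succ, h₁.1, h₂.1, h₃.1]
  · simp [pairwise_fin_succ_iff, Fin.forall_fin_succ, Subsingleton.pairwise, hinter h₁ h₂ h₁₂,
      hinter h₂ h₁ h₁₂.symm, hinter h₁ h₃ h₁₃, hinter h₃ h₁ h₁₃.symm, hinter h₂ h₃ h₂₃,
      hinter h₃ h₂ h₂₃.symm]

theorem IsPlanar.sum_card_peripheralCycles_le (hG : IsPlanar G) (hdeg : ∀ x, 3 ≤ G.degree x) :
    ∑ J ∈ peripheralCycles G, #J ≤ 2 * #G.edgeFinset := by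
  have hcomm := Finset.sum_card_bipartiteAbove_eq_sum_card_bipartiteBelow
    (s := peripheralCycles G) (t := G.edgeFinset) fun J e ↦ e ∈ edgesIn G J
  have hedges : ∀ J ∈ peripheralCycles G, #{e ∈ G.edgeFinset | e ∈ edgesIn G J} = #J := by
    intro J hJ
    rw [← (mem_peripheralCycles.1 hJ).card_edgesIn]
    congr 1
    ext e
    simpa using fun he : e ∈ edgesIn G J ↦ (Finset.mem_filter.1 he).2
  calc ∑ J ∈ peripheralCycles G, #J
      = ∑ e ∈ G.edgeFinset, #{J ∈ peripheralCycles G | e ∈ edgesIn G J} :=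
        (Finset.sum_congr rfl hedges).symm.trans hcomm
    _ ≤ #G.edgeFinset • 2 :=
        Finset.sum_le_card_nsmul _ _ _ fun e _ ↦ hG.card_filter_mem_edgesIn_le_two hdeg e
    _ = 2 * #G.edgeFinset := by rw [smul_eq_mul, mul_comm]

end ThreePeripheralCycles

/-! ### Counting triangles -/

section Triangles

variable {G : SimpleGraph V} {T : Finset V} {x y v : V}

theorem exists_eq_of_isNClique_three (hT : G.IsNClique 3 T) (hx : x ∈ T) (hy : y ∈ T)
    (hxy : x ≠ y) : ∃ z, G.Adj x y ∧ G.Adj x z ∧ G.Adj y z ∧ T = {x, y, z} := by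
  obtain ⟨z, hzT, hz⟩ := Finset.exists_mem_notMem_of_card_lt_card
    (show #{x, y} < #T from hT.card_eq ▸ Nat.lt_succ_of_le Finset.card_le_two)
  simp only [Finset.mem_insert, Finset.mem_singleton, not_or] at hz
  refine ⟨z, hT.isClique hx hy hxy, hT.isClique hx hzT (Ne.symm hz.1),
    hT.isClique hy hzT (Ne.symm hz.2), (Finset.eq_of_subset_of_card_le ?_ ?_).symm⟩
  · simp [Finset.insert_subset_iff, hx, hy, hzT]
  · rw [hT.card_eq, Finset.card_eq_three.2 ⟨x, y, z, hxy, Ne.symm hz.1, Ne.symm hz.2, rfl⟩]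

theorem containsK4minus.of_induce {s : Set V} (h : containsK4minus (G.induce s)) :
    containsK4minus G := by
  obtain ⟨a, b, c, d, hab, hac, had, hbc, hbd, hcd, hadj⟩ := h
  simp only [ne_eq, ← Subtype.coe_inj] at hab hac had hbc hbd hcd
  exact ⟨a, b, c, d, hab, hac, had, hbc, hbd, hcd, hadj⟩

theorem eq_of_not_containsK4minus (hG : ¬ containsK4minus G) {a b c d : V} (hab : G.Adj a b)
    (hac : G.Adj a c) (hbc : G.Adj b c) (had : G.Adj a d) (hbd : G.Adj b d) : c = d := by
  by_contra hcd
  exact hG ⟨a, b, c, d, hab.ne, hac.ne, had.ne, hbc.ne, hbd.ne, hcd, hab, hac, had, hbc, hbd⟩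

theorem edgeDisjointTriangles_of_not_containsK4minus (hG : ¬ containsK4minus G) :
    G.EdgeDisjointTriangles := by
  intro T hT T' hT' hne x ⟨hxT, hxT'⟩ y ⟨hyT, hyT'⟩
  by_contra hxy
  obtain ⟨z, hadj, hxz, hyz, rfl⟩ := exists_eq_of_isNClique_three hT hxT hyT hxy
  obtain ⟨w, -, hxw, hyw, rfl⟩ := exists_eq_of_isNClique_three hT' hxT' hyT' hxy
  exact hne (eq_of_not_containsK4minus hG hadj hxz hyz hxw hyw ▸ rfl)

variable [Fintype V]

theorem two_mul_card_filter_mem_cliqueFinset_le (hG : G.EdgeDisjointTriangles) (x : V) :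
    2 * #{T ∈ G.cliqueFinset 3 | x ∈ T} ≤ G.degree x := by
  have hdisj : (({T ∈ G.cliqueFinset 3 | x ∈ T} : Finset _) : Set (Finset V)).PairwiseDisjoint
      (Finset.erase · x) := by
    intro T hT T' hT' hne
    simp only [Finset.coe_filter, mem_cliqueFinset_iff, Set.mem_ofPred_eq] at hT hT'
    refine Finset.disjoint_left.2 fun z hz hz' ↦ ?_
    rw [Finset.mem_erase] at hz hz'
    exact hz.1 (hG hT.1 hT'.1 hne ⟨hz.2, hz'.2⟩ ⟨hT.2, hT'.2⟩)
  calc 2 * #{T ∈ G.cliqueFinset 3 | x ∈ T}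
      = ∑ T ∈ G.cliqueFinset 3 with x ∈ T, #(T.erase x) := by
        rw [mul_comm, ← smul_eq_mul, ← Finset.sum_const]
        refine Finset.sum_congr rfl fun T hT ↦ ?_
        rw [Finset.mem_filter, mem_cliqueFinset_iff] at hT
        rw [Finset.card_erase_of_mem hT.2, hT.1.card_eq]
    _ = #(({T ∈ G.cliqueFinset 3 | x ∈ T} : Finset _).biUnion (Finset.erase · x)) :=
        (Finset.card_biUnion hdisj).symm
    _ ≤ G.degree x := Finset.card_le_card <| Finset.biUnion_subset.2 fun T hT z hz ↦ by
        rw [Finset.mem_filter, mem_cliqueFinset_iff] at hT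
        rw [Finset.mem_erase] at hz
        exact (G.mem_neighborFinset x z).2 (hT.1.isClique hT.2 hz.2 hz.1.symm)

theorem two_mul_card_cliqueFinset_le_sum_compl {S : Finset V}
    (hS : ∀ T, G.IsNClique 3 T → #{x ∈ T | x ∈ S} ≤ 1) :
    2 * #(G.cliqueFinset 3) ≤ ∑ x ∈ Sᶜ, #{T ∈ G.cliqueFinset 3 | x ∈ T} := by
  have hcomm := Finset.sum_card_bipartiteAbove_eq_sum_card_bipartiteBelow
    (s := G.cliqueFinset 3) (t := Sᶜ) fun T x ↦ x ∈ T
  refine le_of_le_of_eq ?_ hcomm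
  rw [mul_comm, ← smul_eq_mul]
  refine Finset.card_nsmul_le_sum _ _ _ fun T hT ↦ ?_
  have hoff : {x ∈ Sᶜ | x ∈ T} = {x ∈ T | x ∉ S} := by
    ext x
    simp [and_comm]
  have hsplit := T.card_filter_add_card_filter_not (· ∈ S)
  have hT := mem_cliqueFinset_iff.1 hT
  have hTS := hS T hT
  rw [hT.card_eq] at hsplit
  rw [Finset.bipartiteAbove, hoff]
  omega

theorem two_mul_card_cliqueFinset_add_eight_mul_card_le (hG : G.EdgeDisjointTriangles)
    {S : Finset V} (hS : ∀ T, G.IsNClique 3 T → #{x ∈ T | x ∈ S} ≤ 1)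
    (hdeg : ∀ x ∈ S, 4 ≤ G.degree x) (hdeg' : ∀ x ∉ S, 5 ≤ G.degree x) :
    2 * #(G.cliqueFinset 3) + 8 * Fintype.card V ≤ 4 * #G.edgeFinset := by
  have htriangles := two_mul_card_cliqueFinset_le_sum_compl hS
  have hon : ∑ x ∈ S, 8 ≤ ∑ x ∈ S, 2 * G.degree x :=
    Finset.sum_le_sum fun x hx ↦ by have := hdeg x hx; omega
  have hoff : ∑ x ∈ Sᶜ, (#{T ∈ G.cliqueFinset 3 | x ∈ T} + 8) ≤ ∑ x ∈ Sᶜ, 2 * G.degree x :=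
    Finset.sum_le_sum fun x hx ↦ by
      have hx₅ := hdeg' x (Finset.mem_compl.1 hx)
      have hxT := two_mul_card_filter_mem_cliqueFinset_le hG x
      omega
  have hdegsum : ∑ x ∈ S, 2 * G.degree x + ∑ x ∈ Sᶜ, 2 * G.degree x = 4 * #G.edgeFinset := by
    rw [Finset.sum_add_sum_compl, ← Finset.mul_sum, G.sum_degrees_eq_twice_card_edges]
    omega
  have hcard := S.card_add_card_compl
  rw [Finset.sum_add_distrib] at hoff
  simp only [Finset.sum_const, smul_eq_mul] at hon hoff
  omega

theorem IsPlanar.two_mul_card_edgeFinset_add_four_le (hG : IsPlanar G) (h3 : IsKConnected 3 G) :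
    2 * #G.edgeFinset + 4 ≤ 4 * Fintype.card V + #(G.cliqueFinset 3) := by
  have hTutte := h3.card_edgeFinset_add_one_le
  have hMacLane := hG.sum_card_peripheralCycles_le h3.le_degree
  have hshort : #{J ∈ peripheralCycles G | #J = 3} ≤ #(G.cliqueFinset 3) :=
    Finset.card_le_card fun J hJ ↦ by
      rw [Finset.mem_filter, mem_peripheralCycles] at hJ
      exact mem_cliqueFinset_iff.2 (hJ.1.isNClique_three hJ.2)
  have hlong : #(peripheralCycles G) • 4 ≤
      ∑ J ∈ peripheralCycles G, (#J + if #J = 3 then 1 else 0) :=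
    Finset.card_nsmul_le_sum _ _ _ fun J hJ ↦ by
      have hJ₃ := (mem_peripheralCycles.1 hJ).three_le_card
      split_ifs <;> omega
  rw [Finset.sum_add_distrib, ← Finset.card_filter, smul_eq_mul] at hlong
  omega

end Triangles

/-! ### Deleting a vertex -/

section Deletion

variable {G : SimpleGraph V} {k l : ℕ} {v : V}

theorem IsKConnected.mono (hG : IsKConnected k G) (h : l ≤ k) : IsKConnected l G :=
  ⟨h.trans_lt hG.1, fun S hS hSl ↦ hG.2 S hS (hSl.trans_le h)⟩

theorem IsKConnected.finite (hG : IsKConnected k G) : Finite V :=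
  Set.finite_univ_iff.1 (Set.finite_of_ncard_ne_zero (Nat.ne_zero_of_lt hG.1))

theorem IsKConnected.induce_compl_singleton (hG : IsKConnected (k + 1) G) (v : V) :
    IsKConnected k (G.induce {v}ᶜ) := by
  have := hG.finite
  constructor
  · have hcard := Set.ncard_add_ncard_compl {v}
    have hlt := hG.1
    rw [Set.ncard_singleton] at hcard
    rw [Set.ncard_univ] at hlt
    rw [Set.ncard_univ, Nat.card_coe_set_eq]
    omega
  · intro S _ hSk
    have hncard : (insert v (Subtype.val '' S)).ncard < k + 1 :=
      (Set.ncard_insert_le _ _).trans_lt (by simpa [Set.ncard_image_of_injective] using hSk)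
    have hmem (z : V) :
        z ∈ (insert v (Subtype.val '' S))ᶜ ↔ ∃ h : z ∈ ({v}ᶜ : Set V), ⟨z, h⟩ ∉ S := by
      by_cases hz : z = v <;> simp [hz]
    let φ : G.induce (insert v (Subtype.val '' S))ᶜ →g (G.induce {v}ᶜ).induce Sᶜ :=
      ⟨fun z ↦ ⟨⟨z, ((hmem z).1 z.2).1⟩, ((hmem z).1 z.2).2⟩, id⟩
    exact (hG.2 _ (Set.toFinite _) hncard).map φ fun z ↦ ⟨⟨z, (hmem z).2 ⟨z.1.2, z.2⟩⟩, rfl⟩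

theorem card_filter_adj_le_one_of_not_containsK4minus (hG : ¬ containsK4minus G)
    {T : Finset ({v}ᶜ : Set V)} (hT : (G.induce {v}ᶜ).IsNClique 3 T) :
    #(T.filter fun x ↦ G.Adj v x.1) ≤ 1 := by
  refine Finset.card_le_one.2 fun x hx y hy ↦ by_contra fun hxy ↦ ?_
  rw [Finset.mem_filter] at hx hy
  obtain ⟨z, hadj, hxz, hyz, -⟩ := exists_eq_of_isNClique_three hT hx.1 hy.1 hxy
  exact z.2 (eq_of_not_containsK4minus hG hadj hxz hyz hx.2.symm hy.2.symm)

end Deletion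

theorem stmt15_general {V : Type*} (G : SimpleGraph V)
    (h5 : IsKConnected 5 G) (v : V) (hv : IsPlanar (G.induce ({v}ᶜ : Set V))) :
    containsK4minus G := by
  by_contra hG
  have := h5.finite
  have := Fintype.ofFinite V
  have h4 : IsKConnected 4 (G.induce {v}ᶜ) := h5.induce_compl_singleton v
  have hlower := hv.two_mul_card_edgeFinset_add_four_le (h4.mono (by omega))
  have hupper := two_mul_card_cliqueFinset_add_eight_mul_card_le (S := {x | G.Adj v x})
    (edgeDisjointTriangles_of_not_containsK4minus fun h ↦ hG h.of_induce)
    (fun T hT ↦ ?_) (fun x _ ↦ h4.le_degree x) (fun x hx ↦ ?_)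
  · omega
  · simpa using card_filter_adj_le_one_of_not_containsK4minus hG hT
  · have hvx : ¬ G.Adj v x := by simpa using hx
    convert h5.le_degree x.1 using 1
    refine degree_induce_of_neighborSet_subset ?_
    rintro y hxy rfl
    exact hvx hxy.symm

end

/-- A 5-connected nonplanar apex graph with an apex vertex lying
in a 5-element vertex cut contains a subdivision of `K₅` or `K₄⁻`. -/
theorem stmt15 {V : Type*} [Fintype V] (G : SimpleGraph V)
    (h5 : IsKConnected 5 G) (hnp : ¬ IsPlanar G)
    (v : V) (hv : IsPlanar (G.induce ({v}ᶜ : Set V)))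
    (D : Finset V) (hD : D.card = 5) (hvD : v ∈ D)
    (hcut : ¬ (G.induce ((↑D : Set V)ᶜ)).Connected) :
    containsK5Subdivision G ∨ containsK4minus G :=
  Or.inr (stmt15_general G h5 v hv)
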